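/- arXiv:2109.02121 — 5 statements merged into one kernel-verified Lean document; each statement's English description precedes it below -/
import Mathlib

section
/- Let n ≥ 1 and for r > 0 set Φ(r) := vol( B(0,1) ∖ B(r e₁, 1) ) / r, where B(a,1) is the closed unit ball of ℝⁿ centered at a, vol is n-dimensional Lebesgue measure, and e₁ is the first standard basis vector of ℝⁿ. Then Φ is nonincreasing on (0, ∞) and lim_{r→0⁺} Φ(r) = ω_{n−1}; in particular vol( B(0,1) ∖ B(r e₁, 1) ) ≤ ω_{n−1} · r for every r > 0. -/
open MeasureTheory Filter Topology

/-- `ω_m = π^{m/2}/Γ(1 + m/2)`, the Lebesgue volume of the unit ball of `ℝ^m`. -/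
noncomputable def unitBallVol (m : ℕ) : ℝ :=
  Real.pi ^ ((m : ℝ) / 2) / Real.Gamma (1 + (m : ℝ) / 2)

/-!
Cut the two balls by the lines parallel to the direction `v` of the translation. Each line meets
`B(0,1)` in a segment of some length `ℓ`, and a segment minus its translate by `r` has length
`min r ℓ`. By Fubini `Φ(r) = ∫ min 1 (ℓ(y) / r) dy` over the hyperplane orthogonal to `v`. The
integrand increases as `r` decreases to `0`, and its limit is the indicator of `{ℓ > 0}`, which is
the open unit ball of the hyperplane.
-/

open Set Metric Module
open scoped ENNReal

section Interval

variable {I : Set ℝ}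

lemma exists_ae_eq_Ico_of_ordConnected (hI : I.OrdConnected) (hb : Bornology.IsBounded I) :
    ∃ a b, I =ᵐ[volume] Ico a b := by
  rcases I.eq_empty_or_nonempty with rfl | hne
  · exact ⟨0, 0, by simp⟩
  have Ioo_subset : Ioo (sInf I) (sSup I) ⊆ I :=
    IsConnected.Ioo_csInf_csSup_subset ⟨hne, hI.isPreconnected⟩ hb.bddBelow hb.bddAbove
  have subset_Icc : I ⊆ Icc (sInf I) (sSup I) :=
    subset_Icc_csInf_csSup hb.bddBelow hb.bddAbove
  refine ⟨sInf I, sSup I, EventuallyLE.antisymm ?_ ?_⟩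
  · exact subset_Icc.eventuallyLE.trans Ico_ae_eq_Icc.symm.le
  · exact Ioo_ae_eq_Ico.symm.le.trans Ioo_subset.eventuallyLE

lemma Ico_diff_preimage_sub_const {r : ℝ} (hr : 0 ≤ r) (a b : ℝ) :
    Ico a b \ (· - r) ⁻¹' Ico a b = Ico a (min b (a + r)) := by
  ext t
  simp only [Set.mem_sdiff, mem_preimage, mem_Ico, lt_min_iff]
  grind

lemma volume_diff_preimage_sub_const (hI : I.OrdConnected) (hb : Bornology.IsBounded I)
    {r : ℝ} (hr : 0 ≤ r) :
    volume (I \ (· - r) ⁻¹' I) = min (ENNReal.ofReal r) (volume I) := by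
  obtain ⟨a, b, hab⟩ := exists_ae_eq_Ico_of_ordConnected hI hb
  have hab_shift : (· - r) ⁻¹' I =ᵐ[volume] (· - r) ⁻¹' Ico a b :=
    (measurePreserving_sub_right volume r).quasiMeasurePreserving.preimage_ae_eq hab
  rw [measure_congr (hab.diff hab_shift), measure_congr hab, Ico_diff_preimage_sub_const hr,
    Real.volume_Ico, Real.volume_Ico, ← min_sub_sub_right, add_sub_cancel_left,
    ENNReal.ofReal_min, min_comm]

end Interval

section MinOneDiv

variable {Y : Type*} {ℓ : Y → ℝ≥0∞}

lemma min_one_div_le_indicator_support (c : ℝ≥0∞) (y : Y) :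
    min 1 (ℓ y / c) ≤ (Function.support ℓ).indicator 1 y := by
  by_cases hy : ℓ y = 0 <;> simp [indicator, hy]

lemma tendsto_min_one_div_indicator_support (y : Y) :
    Tendsto (fun r : ℝ ↦ min 1 (ℓ y / ENNReal.ofReal r)) (𝓝[>] 0)
      (𝓝 ((Function.support ℓ).indicator 1 y)) := by
  by_cases hy : ℓ y = 0
  · simp [indicator, hy]
  have tendsto_ofReal : Tendsto ENNReal.ofReal (𝓝[>] 0) (𝓝 0) := by
    simpa using (ENNReal.continuous_ofReal.tendsto 0).mono_left nhdsWithin_le_nhds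
  have tendsto_div : Tendsto (fun r : ℝ ↦ ℓ y / ENNReal.ofReal r) (𝓝[>] 0) (𝓝 ∞) := by
    rw [← ENNReal.div_zero hy]
    exact ENNReal.Tendsto.const_div tendsto_ofReal (Or.inl ENNReal.zero_ne_top)
  simpa [indicator, hy] using tendsto_const_nhds.min tendsto_div

variable [MeasurableSpace Y] {μ : Measure Y}

lemma antitone_lintegral_min_one_div :
    Antitone fun r : ℝ ↦ ∫⁻ y, min 1 (ℓ y / ENNReal.ofReal r) ∂μ := by
  intro r s hrs
  dsimp only
  gcongr

lemma lintegral_min_one_div_le (hℓ : Measurable ℓ) (c : ℝ≥0∞) :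
    ∫⁻ y, min 1 (ℓ y / c) ∂μ ≤ μ (Function.support ℓ) := by
  rw [← lintegral_indicator_one (measurableSet_support hℓ)]
  exact lintegral_mono (min_one_div_le_indicator_support c)

lemma tendsto_lintegral_min_one_div (hℓ : Measurable ℓ) (hfin : μ (Function.support ℓ) ≠ ∞) :
    Tendsto (fun r : ℝ ↦ ∫⁻ y, min 1 (ℓ y / ENNReal.ofReal r) ∂μ) (𝓝[>] 0)
      (𝓝 (μ (Function.support ℓ))) := by
  have lintegral_eq := lintegral_indicator_one (μ := μ) (measurableSet_support hℓ)
  rw [← lintegral_eq] at hfin ⊢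
  exact tendsto_lintegral_filter_of_dominated_convergence _
    (Eventually.of_forall fun r ↦ by fun_prop)
    (Eventually.of_forall fun r ↦ ae_of_all _ (min_one_div_le_indicator_support _))
    hfin (ae_of_all _ tendsto_min_one_div_indicator_support)

end MinOneDiv

section Slice

variable {Y : Type*} {K : Set (ℝ × Y)}

/-- The slice of `K ⊆ ℝ × Y` by the line over `y : Y`, as a subset of `ℝ`. -/
def slice (K : Set (ℝ × Y)) (y : Y) : Set ℝ :=
  (fun t ↦ (t, y)) ⁻¹' K

/-- The part of `K ⊆ ℝ × Y` outside its translate `K + (r, 0)`. The translate is written as a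
preimage, so that `Y` needs no additive structure. -/
def shiftDiff (K : Set (ℝ × Y)) (r : ℝ) : Set (ℝ × Y) :=
  K \ Prod.map (· - r) id ⁻¹' K

lemma slice_shiftDiff (K : Set (ℝ × Y)) (r : ℝ) (y : Y) :
    slice (shiftDiff K r) y = slice K y \ (· - r) ⁻¹' slice K y :=
  rfl

variable [MeasurableSpace Y]

lemma measurableSet_shiftDiff (hK : MeasurableSet K) (r : ℝ) : MeasurableSet (shiftDiff K r) :=
  hK.diff (((measurable_id.sub_const r).prodMap measurable_id) hK)

lemma measurable_volume_slice (hK : MeasurableSet K) : Measurable fun y ↦ volume (slice K y) :=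
  measurable_measure_prodMk_right hK

lemma prod_shiftDiff_div {μ : Measure Y} [SFinite μ] (hK : MeasurableSet K)
    (hconn : ∀ y, (slice K y).OrdConnected) (hbdd : ∀ y, Bornology.IsBounded (slice K y))
    {r : ℝ} (hr : 0 < r) :
    (volume.prod μ) (shiftDiff K r) / ENNReal.ofReal r =
      ∫⁻ y, min 1 (volume (slice K y) / ENNReal.ofReal r) ∂μ := by
  have hr₀ : ENNReal.ofReal r ≠ 0 := by simpa using hr
  calc (volume.prod μ) (shiftDiff K r) / ENNReal.ofReal r
      = (∫⁻ y, volume (slice (shiftDiff K r) y) ∂μ) / ENNReal.ofReal r := by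
        rw [Measure.prod_apply_symm (measurableSet_shiftDiff hK r)]
        rfl
    _ = (∫⁻ y, min (ENNReal.ofReal r) (volume (slice K y)) ∂μ) / ENNReal.ofReal r := by
        simp_rw [slice_shiftDiff, volume_diff_preimage_sub_const (hconn _) (hbdd _) hr.le]
    _ = ∫⁻ y, min (ENNReal.ofReal r) (volume (slice K y)) / ENNReal.ofReal r ∂μ := by
        simp_rw [div_eq_mul_inv]
        rw [lintegral_mul_const' _ _ (by simpa using hr)]
    _ = ∫⁻ y, min 1 (volume (slice K y) / ENNReal.ofReal r) ∂μ := by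
        have min_div (a b c : ℝ≥0∞) : min a b / c = min (a / c) (b / c) :=
          Monotone.map_min (f := (· / c)) fun _ _ h ↦ ENNReal.div_le_div_right h c
        simp_rw [min_div, ENNReal.div_self hr₀ ENNReal.ofReal_ne_top]

end Slice

section SqLe

lemma ordConnected_setOf_sq_le (c : ℝ) : {t : ℝ | t ^ 2 ≤ c}.OrdConnected := by
  simpa using ((even_two.convexOn_pow (𝕜 := ℝ)).convex_le c).ordConnected

lemma isBounded_setOf_sq_le (c : ℝ) : Bornology.IsBounded {t : ℝ | t ^ 2 ≤ c} :=
  (isBounded_Icc (-√c) √c).subset fun _ ht ↦ abs_le.1 (Real.abs_le_sqrt ht)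

lemma volume_setOf_sq_le (c : ℝ) : volume {t : ℝ | t ^ 2 ≤ c} = ENNReal.ofReal (2 * √c) := by
  rcases le_or_gt 0 c with hc | hc
  · have eq_Icc : {t : ℝ | t ^ 2 ≤ c} = Icc (-√c) √c := ext fun _ ↦ Real.sq_le hc
    rw [eq_Icc, Real.volume_Icc, sub_neg_eq_add, two_mul]
  · have eq_empty : {t : ℝ | t ^ 2 ≤ c} = ∅ :=
      eq_empty_of_forall_notMem fun t ht ↦ (hc.trans_le (sq_nonneg t)).not_ge ht
    simp [eq_empty, Real.sqrt_eq_zero_of_nonpos hc.le]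

end SqLe

lemma unitBallVol_nonneg (m : ℕ) : 0 ≤ unitBallVol m :=
  div_nonneg (by positivity) (Real.Gamma_pos_of_pos (by positivity)).le

section InnerProductSpace

variable {E : Type*} [NormedAddCommGroup E] [InnerProductSpace ℝ E]

/-- The parametrization of `E` by the line spanned by `v` and the hyperplane orthogonal to it. It is
an isometric change of coordinates, for the `L²` norm on the product, when `v` is a unit vector. -/
def orthogonalCoord (v : E) (p : ℝ × (ℝ ∙ v)ᗮ) : E :=
  p.1 • v + p.2

lemma orthogonalCoord_sub_smul (v : E) (p : ℝ × (ℝ ∙ v)ᗮ) (r : ℝ) :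
    orthogonalCoord v p - r • v = orthogonalCoord v (Prod.map (· - r) id p) := by
  simp only [orthogonalCoord, Prod.map_fst, Prod.map_snd, id, sub_smul]
  abel

lemma preimage_orthogonalCoord_closedBall_diff (v : E) (r : ℝ) :
    orthogonalCoord v ⁻¹' (closedBall 0 1 \ closedBall (r • v) 1) =
      shiftDiff (orthogonalCoord v ⁻¹' closedBall 0 1) r := by
  ext p
  simp only [shiftDiff, mem_preimage, Set.mem_sdiff, mem_closedBall_iff_norm,
    sub_zero, orthogonalCoord_sub_smul]

variable {v : E}

lemma norm_orthogonalCoord_sq (hv : ‖v‖ = 1) (p : ℝ × (ℝ ∙ v)ᗮ) :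
    ‖orthogonalCoord v p‖ ^ 2 = p.1 ^ 2 + ‖p.2‖ ^ 2 := by
  have inner_eq_zero : inner ℝ (p.1 • v) (p.2 : E) = 0 := by
    rw [inner_smul_left, Submodule.mem_orthogonal_singleton_iff_inner_right.1 p.2.2, mul_zero]
  simpa [orthogonalCoord, sq, norm_smul, hv] using
    norm_add_sq_eq_norm_sq_add_norm_sq_real inner_eq_zero

lemma slice_preimage_orthogonalCoord_closedBall (hv : ‖v‖ = 1) (y : (ℝ ∙ v)ᗮ) :
    slice (orthogonalCoord v ⁻¹' closedBall 0 1) y = {t | t ^ 2 ≤ 1 - ‖y‖ ^ 2} := by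
  ext t
  rw [slice, mem_preimage, mem_preimage, mem_closedBall_zero_iff,
    ← sq_le_one_iff₀ (norm_nonneg _), norm_orthogonalCoord_sq hv, mem_ofPred_eq,
    le_sub_iff_add_le]

/-- The length of the chord cut from the closed unit ball by the line through `y` in direction
`v`, for `y` in the hyperplane orthogonal to `v`. -/
noncomputable def chordLength (v : E) (y : (ℝ ∙ v)ᗮ) : ℝ≥0∞ :=
  volume (slice (orthogonalCoord v ⁻¹' closedBall 0 1) y)

lemma support_chordLength (hv : ‖v‖ = 1) : Function.support (chordLength v) = ball 0 1 := by
  ext y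
  rw [Function.mem_support, chordLength, slice_preimage_orthogonalCoord_closedBall hv,
    volume_setOf_sq_le, mem_ball_zero_iff, ← sq_lt_one_iff₀ (norm_nonneg y)]
  simp

lemma finrank_orthogonal_span_singleton_eq_sub_one [FiniteDimensional ℝ E] (hv : v ≠ 0) :
    finrank ℝ (ℝ ∙ v)ᗮ = finrank ℝ E - 1 := by
  rw [← (ℝ ∙ v).finrank_add_finrank_orthogonal, finrank_span_singleton hv, add_tsub_cancel_left]

variable [FiniteDimensional ℝ E] [MeasurableSpace E] [BorelSpace E]

lemma measurePreserving_orthogonalCoord (hv : ‖v‖ = 1) :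
    MeasurePreserving (orthogonalCoord v) := by
  have lineCoord := (LinearIsometryEquiv.toSpanUnitSingleton (𝕜 := ℝ) v hv).measurePreserving
  exact (ℝ ∙ v).orthogonalDecomposition.symm.measurePreserving.comp <|
    (WithLp.volume_preserving_toLp (ℝ ∙ v) (ℝ ∙ v)ᗮ).comp <|
      lineCoord.prod (MeasurePreserving.id volume)

lemma measurable_chordLength (hv : ‖v‖ = 1) : Measurable (chordLength v) :=
  measurable_volume_slice <|
    (measurePreserving_orthogonalCoord hv).measurable measurableSet_closedBall

lemma volume_univ_of_subsingleton [Subsingleton E] : volume (univ : Set E) = 1 := by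
  have : IsEmpty (Fin (finrank ℝ E)) := by
    rw [finrank_zero_of_subsingleton]
    infer_instance
  rw [← (stdOrthonormalBasis ℝ E).measurePreserving_repr_symm.measure_preimage
    MeasurableSet.univ.nullMeasurableSet, preimage_univ, volume_euclideanSpace_eq_dirac,
    measure_univ]

variable (E) in
lemma volume_ball_zero_one_eq_unitBallVol :
    volume (ball (0 : E) 1) = ENNReal.ofReal (unitBallVol (finrank ℝ E)) := by
  rcases subsingleton_or_nontrivial E with hE | hE
  · have ball_eq_univ : ball (0 : E) 1 = univ :=
      eq_univ_of_forall fun x ↦ by simp [Subsingleton.elim x 0]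
    simp [ball_eq_univ, volume_univ_of_subsingleton, unitBallVol, finrank_zero_of_subsingleton]
  · have sqrt_pi_pow (m : ℕ) : √Real.pi ^ m = Real.pi ^ ((m : ℝ) / 2) := by
      rw [Real.sqrt_eq_rpow, ← Real.rpow_mul_natCast Real.pi_pos.le, one_div_mul_eq_div]
    rw [InnerProductSpace.volume_ball, ENNReal.ofReal_one, one_pow, one_mul, sqrt_pi_pow,
      add_comm, unitBallVol]

lemma volume_support_chordLength (hv : ‖v‖ = 1) :
    volume (Function.support (chordLength v)) =
      ENNReal.ofReal (unitBallVol (finrank ℝ E - 1)) := by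
  have hv₀ : v ≠ 0 := norm_ne_zero_iff.1 (by simp [hv])
  rw [support_chordLength hv, volume_ball_zero_one_eq_unitBallVol,
    finrank_orthogonal_span_singleton_eq_sub_one hv₀]

lemma lintegral_min_one_chordLength_div_le (hv : ‖v‖ = 1) (c : ℝ≥0∞) :
    ∫⁻ y, min 1 (chordLength v y / c) ≤ ENNReal.ofReal (unitBallVol (finrank ℝ E - 1)) :=
  volume_support_chordLength hv ▸ lintegral_min_one_div_le (measurable_chordLength hv) c

lemma volume_closedBall_diff_div (hv : ‖v‖ = 1) {r : ℝ} (hr : 0 < r) :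
    volume (closedBall 0 1 \ closedBall (r • v) 1) / ENNReal.ofReal r =
      ∫⁻ y, min 1 (chordLength v y / ENNReal.ofReal r) := by
  have hcoord := measurePreserving_orthogonalCoord hv
  have hdiff : MeasurableSet (closedBall (0 : E) 1 \ closedBall (r • v) 1) :=
    measurableSet_closedBall.diff measurableSet_closedBall
  rw [← hcoord.measure_preimage hdiff.nullMeasurableSet, preimage_orthogonalCoord_closedBall_diff]
  refine prod_shiftDiff_div (hcoord.measurable measurableSet_closedBall)
    (fun y ↦ ?ordConnected) (fun y ↦ ?isBounded) hr
  all_goals rw [slice_preimage_orthogonalCoord_closedBall hv]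
  case ordConnected => exact ordConnected_setOf_sq_le _
  case isBounded => exact isBounded_setOf_sq_le _

lemma toReal_volume_closedBall_diff_div (hv : ‖v‖ = 1) {r : ℝ} (hr : 0 < r) :
    (volume (closedBall 0 1 \ closedBall (r • v) 1)).toReal / r =
      (∫⁻ y, min 1 (chordLength v y / ENNReal.ofReal r)).toReal := by
  rw [← volume_closedBall_diff_div hv hr, ENNReal.toReal_div, ENNReal.toReal_ofReal hr.le]

lemma antitoneOn_toReal_volume_closedBall_diff_div (hv : ‖v‖ = 1) :
    AntitoneOn (fun r : ℝ ↦ (volume (closedBall 0 1 \ closedBall (r • v) 1)).toReal / r)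
      (Ioi 0) := by
  intro r hr s hs hrs
  dsimp only
  rw [toReal_volume_closedBall_diff_div hv hr, toReal_volume_closedBall_diff_div hv hs]
  refine ENNReal.toReal_mono ?_ (antitone_lintegral_min_one_div hrs)
  exact ne_top_of_le_ne_top ENNReal.ofReal_ne_top (lintegral_min_one_chordLength_div_le hv _)

lemma tendsto_toReal_volume_closedBall_diff_div (hv : ‖v‖ = 1) :
    Tendsto (fun r : ℝ ↦ (volume (closedBall 0 1 \ closedBall (r • v) 1)).toReal / r)
      (𝓝[>] 0) (𝓝 (unitBallVol (finrank ℝ E - 1))) := by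
  have volume_support := volume_support_chordLength hv
  have tendsto_lintegral := tendsto_lintegral_min_one_div (measurable_chordLength hv)
    (volume_support ▸ ENNReal.ofReal_ne_top)
  rw [volume_support] at tendsto_lintegral
  have tendsto_toReal := (ENNReal.tendsto_toReal ENNReal.ofReal_ne_top).comp tendsto_lintegral
  rw [ENNReal.toReal_ofReal (unitBallVol_nonneg _)] at tendsto_toReal
  refine tendsto_toReal.congr' ?_
  filter_upwards [self_mem_nhdsWithin] with r hr
  exact (toReal_volume_closedBall_diff_div hv hr).symm

lemma toReal_volume_closedBall_diff_le (hv : ‖v‖ = 1) {r : ℝ} (hr : 0 < r) :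
    (volume (closedBall 0 1 \ closedBall (r • v) 1)).toReal ≤
      unitBallVol (finrank ℝ E - 1) * r := by
  rw [← div_le_iff₀ hr, toReal_volume_closedBall_diff_div hv hr]
  exact ENNReal.toReal_le_of_le_ofReal (unitBallVol_nonneg _)
    (lintegral_min_one_chordLength_div_le hv _)

theorem ball_difference_volume_general (hv : ‖v‖ = 1) :
    AntitoneOn (fun r : ℝ ↦ (volume (closedBall 0 1 \ closedBall (r • v) 1)).toReal / r)
      (Ioi 0) ∧
    Tendsto (fun r : ℝ ↦ (volume (closedBall 0 1 \ closedBall (r • v) 1)).toReal / r)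
      (𝓝[>] 0) (𝓝 (unitBallVol (finrank ℝ E - 1))) ∧
    ∀ r : ℝ, 0 < r →
      (volume (closedBall 0 1 \ closedBall (r • v) 1)).toReal ≤
        unitBallVol (finrank ℝ E - 1) * r :=
  ⟨antitoneOn_toReal_volume_closedBall_diff_div hv, tendsto_toReal_volume_closedBall_diff_div hv,
    fun _ ↦ toReal_volume_closedBall_diff_le hv⟩

end InnerProductSpace

/-- the function `Φ(r) = vol(B(0,1) ∖ B(r e₁,1))/r` is nonincreasing on
`(0,∞)` and tends to `ω_{n−1}` as `r → 0⁺`; in particular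
`vol(B(0,1) ∖ B(r e₁,1)) ≤ ω_{n−1} r` for all `r > 0`. -/
theorem ball_difference_volume (n : ℕ) (hn : 0 < n) :
    AntitoneOn
      (fun r : ℝ =>
        (volume (Metric.closedBall (0 : EuclideanSpace ℝ (Fin n)) 1 \
          Metric.closedBall
            (r • EuclideanSpace.single (⟨0, hn⟩ : Fin n) (1 : ℝ)) 1)).toReal / r)
      (Set.Ioi (0 : ℝ)) ∧
    Tendsto
      (fun r : ℝ =>
        (volume (Metric.closedBall (0 : EuclideanSpace ℝ (Fin n)) 1 \
          Metric.closedBall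
            (r • EuclideanSpace.single (⟨0, hn⟩ : Fin n) (1 : ℝ)) 1)).toReal / r)
      (𝓝[>] (0 : ℝ)) (𝓝 (unitBallVol (n - 1))) ∧
    ∀ r : ℝ, 0 < r →
      (volume (Metric.closedBall (0 : EuclideanSpace ℝ (Fin n)) 1 \
        Metric.closedBall
          (r • EuclideanSpace.single (⟨0, hn⟩ : Fin n) (1 : ℝ)) 1)).toReal ≤
        unitBallVol (n - 1) * r := by
  simpa only [finrank_euclideanSpace_fin] using
    ball_difference_volume_general (v := EuclideanSpace.single (⟨0, hn⟩ : Fin n) (1 : ℝ)) (by simp)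
end

section
/- Let χ : ℝ → [0,1] be a C^∞ function with χ = 1 on [−1,1] and χ = 0 outside [−2,2]. Then for every x ∈ ℝ the improper integral defining Ai(x) converges, and for every integer k ≥ 1 there exists a constant C_k > 0 such that for every ε ∈ (0,1] and every x ∈ ℝ with x > −ε^{-2}: | (2π)^{-1} ∫_ℝ e^{i(t³/3 + x t)} χ(ε t) dt − Ai(x) | ≤ C_k (ε^{-2} + x)^{-k}. -/
open MeasureTheory Filter Topology

/-- The Airy function `Ai(x) = lim_{R→∞} (1/π) ∫_0^R cos(t³/3 + x t) dt`. -/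
noncomputable def Airy (x : ℝ) : ℝ :=
  limUnder Filter.atTop
    (fun R : ℝ => (1 / Real.pi) * ∫ t in (0 : ℝ)..R, Real.cos (t ^ 3 / 3 + x * t))

/-!
After the substitution `s = ε t` the truncation error is the conditionally convergent integral of
`exp (i δ⁻¹ (s³ / 3 + (μ - 1) s)) (1 - χ s)` with `δ = ε³` and `μ = 1 + ε² x = ε² (ε⁻² + x) > 0`.
On the support of `1 - χ` the derivative of the phase is `δ⁻¹ g` with `g = s² - 1 + μ > 0`, so each
integration by parts gains a factor `δ` at the price of dividing the amplitude by `g` and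
differentiating it. Although `g` may be as small as `μ` near `|s| = 1`, the amplitude vanishes to
infinite order there, and dividing by `g` costs no more than dividing by `1 + s² + μ`. After `k + 1`
integrations by parts the amplitude is therefore `O((1 + s² + μ)^(-(k + 1)))`, which is integrable
with integral `O((1 + μ)^(-k))`.
-/

section OscillatoryIntegral

open Complex

variable {θ θ' : ℝ → ℝ} {b b' : ℝ → ℂ}

lemma hasDerivAt_exp_I_mul {s : ℝ} (hθ : HasDerivAt θ (θ' s) s) :
    HasDerivAt (fun u ↦ exp (I * θ u)) (exp (I * θ s) * (I * θ' s)) s :=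
  (hθ.ofReal_comp.const_mul I).cexp

lemma integral_exp_I_mul_deriv_mul (hθ : ∀ s, HasDerivAt θ (θ' s) s)
    (hb : ∀ s, HasDerivAt b (b' s) s) (hθ' : Continuous θ') (hb' : Continuous b') (p q : ℝ) :
    ∫ s in p..q, exp (I * θ s) * (θ' s * b s) =
      I * ((∫ s in p..q, exp (I * θ s) * b' s) -
        (exp (I * θ q) * b q - exp (I * θ p) * b p)) := by
  have hθcont : Continuous θ := continuous_iff_continuousAt.mpr fun s ↦ (hθ s).continuousAt
  have parts := intervalIntegral.integral_mul_deriv_eq_deriv_mul (a := p) (b := q)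
    (fun s _ ↦ hb s) (fun s _ ↦ hasDerivAt_exp_I_mul (hθ s)) (hb'.intervalIntegrable p q)
    (Continuous.intervalIntegrable (by fun_prop) p q)
  have pull_out_I : ∫ s in p..q, b s * (exp (I * θ s) * (I * θ' s)) =
      I * ∫ s in p..q, exp (I * θ s) * (θ' s * b s) := by
    rw [← intervalIntegral.integral_const_mul]
    congr 1 with s
    ring
  simp only [pull_out_I, mul_comm _ (exp _)] at parts
  linear_combination -I * parts + (∫ s in p..q, exp (I * θ s) * (θ' s * b s)) * I_sq

lemma integrable_exp_I_mul_mul (hθ : Continuous θ) (hb : Integrable b) :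
    Integrable fun s ↦ exp (I * θ s) * b s :=
  hb.bdd_mul (c := 1) (by fun_prop) (.of_forall fun s ↦ (norm_exp_I_mul_ofReal _).le)

lemma tendsto_integral_exp_I_mul_deriv_mul (hθ : ∀ s, HasDerivAt θ (θ' s) s)
    (hb : ∀ s, HasDerivAt b (b' s) s) (hθ' : Continuous θ') (hb' : Continuous b')
    (hb'_int : Integrable b') (hb_top : Tendsto b atTop (𝓝 0)) (hb_bot : Tendsto b atBot (𝓝 0)) :
    Tendsto (fun R : ℝ ↦ ∫ s in -R..R, exp (I * θ s) * (θ' s * b s)) atTop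
      (𝓝 (I * ∫ s, exp (I * θ s) * b' s)) := by
  have hθcont : Continuous θ := continuous_iff_continuousAt.mpr fun s ↦ (hθ s).continuousAt
  have boundary {l : Filter ℝ} (hbl : Tendsto b l (𝓝 0)) :
      Tendsto (fun s ↦ exp (I * θ s) * b s) l (𝓝 0) :=
    squeeze_zero_norm (fun s ↦ by rw [norm_mul, norm_exp_I_mul_ofReal, one_mul])
      (tendsto_zero_iff_norm_tendsto_zero.mp hbl)
  have bulk := intervalIntegral_tendsto_integral (integrable_exp_I_mul_mul hθcont hb'_int)
    tendsto_neg_atTop_atBot tendsto_id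
  have limit := (bulk.sub ((boundary hb_top).sub
    ((boundary hb_bot).comp tendsto_neg_atTop_atBot))).const_mul I
  rw [sub_zero, sub_zero] at limit
  exact limit.congr fun R ↦ (integral_exp_I_mul_deriv_mul hθ hb hθ' hb' (-R) R).symm

end OscillatoryIntegral

open scoped ContDiff

/-- A smooth amplitude with bounded derivatives that vanishes on `[-1, 1]`, such as `1 - χ` for a
cutoff `χ`. -/
structure IsFlatAmplitude (ψ : ℝ → ℂ) : Prop where
  contDiff : ContDiff ℝ ∞ ψ
  eq_zero : ∀ s, |s| ≤ 1 → ψ s = 0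
  bounded : ∀ j, ∃ C, ∀ s, ‖iteratedDeriv j ψ s‖ ≤ C

/-- The amplitudes produced from `ψ` by repeatedly differentiating and dividing by `s² - 1 + μ`,
as families indexed by `μ`. For `0 < μ` the denominator can vanish only for `|s| < 1`, where a flat
`ψ` is zero. -/
noncomputable def symbolAtom (ψ : ℝ → ℂ) (j m n : ℕ) : ℝ → ℝ → ℂ :=
  fun μ s ↦ (s ^ m / (s ^ 2 - 1 + μ) ^ n) • iteratedDeriv j ψ s

/-- The space of symbols of order `-N` generated by `ψ`: for flat `ψ` its elements, which are
families of amplitudes indexed by `μ`, are `O((1 + s² + μ)^(-N))` uniformly in `0 < μ`. -/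
noncomputable def symbolSpace (ψ : ℝ → ℂ) (N : ℕ) : Submodule ℝ (ℝ → ℝ → ℂ) :=
  Submodule.span ℝ {a | ∃ j m n, m + N ≤ n ∧ a = symbolAtom ψ j m n}

lemma symbolAtom_mem_symbolSpace (ψ : ℝ → ℂ) {j m n N : ℕ} (h : m + N ≤ n) :
    symbolAtom ψ j m n ∈ symbolSpace ψ N :=
  Submodule.subset_span ⟨j, m, n, h, rfl⟩

lemma norm_le_mul_pow_succ_of_hasDerivAt {E : Type*} [NormedAddCommGroup E] [NormedSpace ℝ E]
    {f f' : ℝ → E} {C : ℝ} {M : ℕ} (hf : ∀ s, HasDerivAt f (f' s) s)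
    (hf0 : ∀ s, |s| ≤ 1 → f s = 0) (hf'0 : ∀ s, |s| ≤ 1 → f' s = 0) (hC : 0 ≤ C)
    (hf' : ∀ s, 1 ≤ |s| → ‖f' s‖ ≤ C * (|s| - 1) ^ M) {s : ℝ} (hs : 1 ≤ |s|) :
    ‖f s‖ ≤ C * (|s| - 1) ^ (M + 1) := by
  have deriv_le : ∀ u ∈ Set.Icc (-|s|) |s|, ‖f' u‖ ≤ C * (|s| - 1) ^ M := by
    intro u hu
    rcases le_total |u| 1 with hu1 | hu1
    · rw [hf'0 u hu1, norm_zero]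
      have : 0 ≤ |s| - 1 := sub_nonneg.mpr hs
      positivity
    · refine (hf' u hu1).trans ?_
      have : |u| ≤ |s| := abs_le.mpr hu
      have : 0 ≤ |u| - 1 := sub_nonneg.mpr hu1
      gcongr
  obtain ⟨e, he, hse⟩ : ∃ e : ℝ, |e| = 1 ∧ |s - e| = |s| - 1 := by
    rcases abs_cases s with ⟨hs_eq, -⟩ | ⟨hs_eq, -⟩ <;> rw [hs_eq] at hs ⊢
    · exact ⟨1, abs_one, abs_of_nonneg (by linarith)⟩
    · exact ⟨-1, by simp, by rw [abs_of_nonpos (by linarith)]; ring⟩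
  have mean_value := (convex_Icc (-|s|) |s|).norm_image_sub_le_of_norm_hasDerivWithin_le
    (fun u _ ↦ (hf u).hasDerivWithinAt) deriv_le (abs_le.mp (he.trans_le hs)) (abs_le.mp le_rfl)
  rwa [hf0 e he.le, sub_zero, Real.norm_eq_abs, hse, mul_assoc, ← pow_succ] at mean_value

lemma min_abs_sub_one_le {s μ : ℝ} (hμ : 0 < μ) (hs : 1 ≤ |s|) :
    min (|s| - 1) 1 ≤ 3 * (s ^ 2 - 1 + μ) / (1 + s ^ 2 + μ) := by
  rw [le_div_iff₀ (by positivity), ← sq_abs s]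
  rcases le_total |s| 2 with hs2 | hs2
  · rw [min_eq_left (by linarith)]
    nlinarith [mul_nonneg (sub_nonneg.mpr hs) (sub_nonneg.mpr hs2),
      mul_nonneg (mul_nonneg (sub_nonneg.mpr hs) (sub_nonneg.mpr hs2)) (abs_nonneg s)]
  · rw [min_eq_right (by linarith)]
    nlinarith

lemma sq_sub_one_add_pos {s μ : ℝ} (hμ : 0 < μ) (hs : 1 ≤ |s|) : 0 < s ^ 2 - 1 + μ := by
  have : 1 ≤ s ^ 2 := (one_le_sq_iff_one_le_abs s).mpr hs
  linarith

lemma abs_pow_div_pow_mul_le {s μ : ℝ} {m n N : ℕ} (hμ : 0 < μ) (hs : 1 ≤ |s|) (h : m + N ≤ n) :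
    |s ^ m / (s ^ 2 - 1 + μ) ^ n| * min (|s| - 1) 1 ^ n ≤ 3 ^ n * ((1 + s ^ 2 + μ) ^ N)⁻¹ := by
  have hg : 0 < s ^ 2 - 1 + μ := sq_sub_one_add_pos hμ hs
  have : 0 ≤ min (|s| - 1) 1 := le_min (sub_nonneg.mpr hs) zero_le_one
  have hs_le : |s| ≤ 1 + s ^ 2 + μ := by rw [← sq_abs s]; nlinarith
  have hw : 1 ≤ 1 + s ^ 2 + μ := hs.trans hs_le
  rw [abs_div, abs_pow, abs_pow, abs_of_pos hg]
  calc |s| ^ m / (s ^ 2 - 1 + μ) ^ n * min (|s| - 1) 1 ^ n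
      ≤ (1 + s ^ 2 + μ) ^ m / (s ^ 2 - 1 + μ) ^ n *
          (3 * (s ^ 2 - 1 + μ) / (1 + s ^ 2 + μ)) ^ n := by
        gcongr
        exact min_abs_sub_one_le hμ hs
    _ = 3 ^ n * ((1 + s ^ 2 + μ) ^ m / (1 + s ^ 2 + μ) ^ n) := by
        rw [div_pow, mul_pow]
        field_simp
    _ ≤ 3 ^ n * ((1 + s ^ 2 + μ) ^ N)⁻¹ := by
        gcongr
        rw [← one_div, div_le_div_iff₀ (by positivity) (by positivity), ← pow_add, one_mul]
        exact pow_le_pow_right₀ hw h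

namespace IsFlatAmplitude

variable {ψ : ℝ → ℂ}

lemma hasDerivAt_iteratedDeriv (hψ : IsFlatAmplitude ψ) (j : ℕ) (s : ℝ) :
    HasDerivAt (iteratedDeriv j ψ) (iteratedDeriv (j + 1) ψ s) s := by
  rw [iteratedDeriv_succ]
  exact (hψ.contDiff.differentiable_iteratedDeriv j (mod_cast WithTop.coe_lt_top j) s).hasDerivAt

lemma iteratedDeriv_eq_zero (hψ : IsFlatAmplitude ψ) (j : ℕ) {s : ℝ} (hs : |s| ≤ 1) :
    iteratedDeriv j ψ s = 0 := by
  have eqOn_Ioo : Set.EqOn (iteratedDeriv j ψ) 0 (Set.Ioo (-1) 1) := by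
    have hzero : Set.EqOn ψ (fun _ ↦ 0) (Set.Ioo (-1) 1) := fun u hu ↦
      hψ.eq_zero u (abs_lt.mpr hu).le
    intro u hu
    simp [hzero.iteratedDeriv_of_isOpen isOpen_Ioo j hu]
  have eqOn_closure := eqOn_Ioo.closure
    (hψ.contDiff.continuous_iteratedDeriv j (mod_cast le_top)) continuous_zero
  rw [closure_Ioo (by norm_num)] at eqOn_closure
  exact eqOn_closure (abs_le.mp hs)

lemma exists_norm_iteratedDeriv_le_mul_pow (hψ : IsFlatAmplitude ψ) (M j : ℕ) :
    ∃ C, 0 ≤ C ∧ ∀ s, 1 ≤ |s| → ‖iteratedDeriv j ψ s‖ ≤ C * (|s| - 1) ^ M := by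
  induction M generalizing j with
  | zero =>
    obtain ⟨C, hC⟩ := hψ.bounded j
    exact ⟨C, (norm_nonneg _).trans (hC 0), fun s _ ↦ by simpa using hC s⟩
  | succ M ih =>
    obtain ⟨C, hC, hbound⟩ := ih (j + 1)
    exact ⟨C, hC, fun s hs ↦ norm_le_mul_pow_succ_of_hasDerivAt (hψ.hasDerivAt_iteratedDeriv j)
      (fun _ ↦ hψ.iteratedDeriv_eq_zero j) (fun _ ↦ hψ.iteratedDeriv_eq_zero (j + 1)) hC hbound hs⟩

lemma exists_norm_iteratedDeriv_le_mul_min_pow (hψ : IsFlatAmplitude ψ) (M j : ℕ) :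
    ∃ C, 0 ≤ C ∧ ∀ s, 1 ≤ |s| → ‖iteratedDeriv j ψ s‖ ≤ C * min (|s| - 1) 1 ^ M := by
  obtain ⟨C, hC, near⟩ := hψ.exists_norm_iteratedDeriv_le_mul_pow M j
  obtain ⟨D, far⟩ := hψ.bounded j
  refine ⟨max C D, hC.trans (le_max_left _ _), fun s hs ↦ ?_⟩
  rcases le_total (|s| - 1) 1 with h | h
  · rw [min_eq_left h]
    have : 0 ≤ |s| - 1 := sub_nonneg.mpr hs
    exact (near s hs).trans (by gcongr; exact le_max_left _ _)
  · rw [min_eq_right h, one_pow, mul_one]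
    exact (far s).trans (le_max_right _ _)

lemma symbolAtom_eq_zero (hψ : IsFlatAmplitude ψ) (j m n : ℕ) (μ : ℝ) {s : ℝ} (hs : |s| ≤ 1) :
    symbolAtom ψ j m n μ s = 0 := by
  rw [symbolAtom, hψ.iteratedDeriv_eq_zero j hs, smul_zero]

lemma exists_norm_symbolAtom_le (hψ : IsFlatAmplitude ψ) {j m n N : ℕ} (h : m + N ≤ n) :
    ∃ C, 0 ≤ C ∧ ∀ μ, 0 < μ → ∀ s,
      ‖symbolAtom ψ j m n μ s‖ ≤ C * ((1 + s ^ 2 + μ) ^ N)⁻¹ := by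
  obtain ⟨C, hC, hbound⟩ := hψ.exists_norm_iteratedDeriv_le_mul_min_pow n j
  refine ⟨C * 3 ^ n, by positivity, fun μ hμ s ↦ ?_⟩
  rcases le_total |s| 1 with hs | hs
  · rw [hψ.symbolAtom_eq_zero j m n μ hs, norm_zero]
    positivity
  · calc ‖symbolAtom ψ j m n μ s‖
        ≤ |s ^ m / (s ^ 2 - 1 + μ) ^ n| * (C * min (|s| - 1) 1 ^ n) := by
          rw [symbolAtom, norm_smul, Real.norm_eq_abs]
          gcongr
          exact hbound s hs
      _ = C * (|s ^ m / (s ^ 2 - 1 + μ) ^ n| * min (|s| - 1) 1 ^ n) := by ring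
      _ ≤ C * (3 ^ n * ((1 + s ^ 2 + μ) ^ N)⁻¹) :=
          mul_le_mul_of_nonneg_left (abs_pow_div_pow_mul_le hμ hs h) hC
      _ = C * 3 ^ n * ((1 + s ^ 2 + μ) ^ N)⁻¹ := by ring

lemma hasDerivAt_symbolAtom (hψ : IsFlatAmplitude ψ) (j m n : ℕ) {μ : ℝ} (hμ : 0 < μ) (s : ℝ) :
    HasDerivAt (symbolAtom ψ j m n μ)
      (symbolAtom ψ (j + 1) m n μ s + (m : ℝ) • symbolAtom ψ j (m - 1) n μ s -
        (2 * n : ℝ) • symbolAtom ψ j (m + 1) (n + 1) μ s) s := by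
  rcases lt_or_ge |s| 1 with hs | hs
  · simp only [hψ.symbolAtom_eq_zero _ _ _ _ hs.le, smul_zero, add_zero, sub_zero]
    have eventually_zero : symbolAtom ψ j m n μ =ᶠ[𝓝 s] fun _ ↦ 0 := by
      filter_upwards [continuous_abs.continuousAt.eventually_lt_const hs] with u hu
      exact hψ.symbolAtom_eq_zero j m n μ hu.le
    exact (hasDerivAt_const s (0 : ℂ)).congr_of_eventuallyEq eventually_zero
  · have hg : s ^ 2 - 1 + μ ≠ 0 := (sq_sub_one_add_pos hμ hs).ne'
    have hg_deriv : HasDerivAt (fun u : ℝ ↦ (u ^ 2 - 1 + μ) ^ n)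
        (n * (s ^ 2 - 1 + μ) ^ (n - 1) * (2 * s)) s := by
      simpa using (((hasDerivAt_pow 2 s).sub_const 1).add_const μ).fun_pow n
    refine (((hasDerivAt_pow m s).fun_div hg_deriv (pow_ne_zero n hg)).fun_smul
      (hψ.hasDerivAt_iteratedDeriv j s)).congr_deriv ?_
    simp only [symbolAtom, smul_smul, ← sub_smul, add_sub_assoc]
    congr 2
    rcases n with _ | n
    · simp
    · rw [Nat.add_sub_cancel]
      field_simp
      ring

variable {N : ℕ} {a : ℝ → ℝ → ℂ}

lemma exists_norm_symbol_le (hψ : IsFlatAmplitude ψ) (ha : a ∈ symbolSpace ψ N) :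
    ∃ C, 0 ≤ C ∧ ∀ μ, 0 < μ → ∀ s, ‖a μ s‖ ≤ C * ((1 + s ^ 2 + μ) ^ N)⁻¹ := by
  induction ha using Submodule.span_induction with
  | mem a ha =>
    obtain ⟨j, m, n, h, rfl⟩ := ha
    exact hψ.exists_norm_symbolAtom_le h
  | zero => exact ⟨0, le_rfl, by simp⟩
  | add a₁ a₂ _ _ ih₁ ih₂ =>
    obtain ⟨C₁, hC₁, h₁⟩ := ih₁
    obtain ⟨C₂, hC₂, h₂⟩ := ih₂
    exact ⟨C₁ + C₂, by positivity, fun μ hμ s ↦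
      (norm_add_le_of_le (h₁ μ hμ s) (h₂ μ hμ s)).trans_eq (add_mul ..).symm⟩
  | smul c a _ ih =>
    obtain ⟨C, hC, h⟩ := ih
    refine ⟨‖c‖ * C, by positivity, fun μ hμ s ↦ ?_⟩
    rw [Pi.smul_apply, Pi.smul_apply, norm_smul, mul_assoc]
    gcongr
    exact h μ hμ s

lemma exists_symbol_hasDerivAt (hψ : IsFlatAmplitude ψ) (ha : a ∈ symbolSpace ψ N) :
    ∃ a' ∈ symbolSpace ψ N, ∀ μ, 0 < μ → ∀ s, HasDerivAt (a μ) (a' μ s) s := by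
  induction ha using Submodule.span_induction with
  | mem a ha =>
    obtain ⟨j, m, n, h, rfl⟩ := ha
    exact ⟨_, sub_mem (add_mem (symbolAtom_mem_symbolSpace ψ h)
      (Submodule.smul_mem _ _ (symbolAtom_mem_symbolSpace ψ (by lia))))
      (Submodule.smul_mem _ _ (symbolAtom_mem_symbolSpace ψ (by lia))),
      fun μ hμ s ↦ hψ.hasDerivAt_symbolAtom j m n hμ s⟩
  | zero => exact ⟨0, zero_mem _, fun _ _ s ↦ hasDerivAt_const s 0⟩
  | add _ _ _ _ ih₁ ih₂ =>
    obtain ⟨a₁', mem₁, h₁⟩ := ih₁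
    obtain ⟨a₂', mem₂, h₂⟩ := ih₂
    exact ⟨a₁' + a₂', add_mem mem₁ mem₂, fun μ hμ s ↦ (h₁ μ hμ s).add (h₂ μ hμ s)⟩
  | smul c _ _ ih =>
    obtain ⟨a', mem, h⟩ := ih
    exact ⟨c • a', Submodule.smul_mem _ c mem, fun μ hμ s ↦ (h μ hμ s).const_smul c⟩

lemma exists_symbol_div (hψ : IsFlatAmplitude ψ) (ha : a ∈ symbolSpace ψ N) :
    ∃ b ∈ symbolSpace ψ (N + 1), ∀ μ, 0 < μ → ∀ s, a μ s = (s ^ 2 - 1 + μ) • b μ s := by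
  induction ha using Submodule.span_induction with
  | mem a ha =>
    obtain ⟨j, m, n, h, rfl⟩ := ha
    refine ⟨symbolAtom ψ j m (n + 1), symbolAtom_mem_symbolSpace ψ (by lia), fun μ hμ s ↦ ?_⟩
    rcases le_total |s| 1 with hs | hs
    · simp [hψ.symbolAtom_eq_zero _ _ _ _ hs]
    · have hg : s ^ 2 - 1 + μ ≠ 0 := (sq_sub_one_add_pos hμ hs).ne'
      rw [symbolAtom, symbolAtom, smul_smul]
      congr 1
      field_simp
      ring
  | zero => exact ⟨0, zero_mem _, by simp⟩
  | add _ _ _ _ ih₁ ih₂ =>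
    obtain ⟨b₁, mem₁, h₁⟩ := ih₁
    obtain ⟨b₂, mem₂, h₂⟩ := ih₂
    exact ⟨b₁ + b₂, add_mem mem₁ mem₂, fun μ hμ s ↦ by simp [h₁ μ hμ s, h₂ μ hμ s]⟩
  | smul c _ _ ih =>
    obtain ⟨b, mem, h⟩ := ih
    exact ⟨c • b, Submodule.smul_mem _ c mem, fun μ hμ s ↦ by
      simp only [Pi.smul_apply, h μ hμ s, smul_comm c]⟩

lemma continuous_symbol (hψ : IsFlatAmplitude ψ) (ha : a ∈ symbolSpace ψ N) {μ : ℝ} (hμ : 0 < μ) :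
    Continuous (a μ) := by
  obtain ⟨a', -, hderiv⟩ := hψ.exists_symbol_hasDerivAt ha
  exact continuous_iff_continuousAt.mpr fun s ↦ (hderiv μ hμ s).continuousAt

lemma exists_norm_symbol_succ_le (hψ : IsFlatAmplitude ψ) (ha : a ∈ symbolSpace ψ (N + 1)) :
    ∃ C, 0 ≤ C ∧ ∀ μ, 0 < μ → ∀ s, ‖a μ s‖ ≤ C * ((1 + μ) ^ N)⁻¹ * (1 + s ^ 2)⁻¹ := by
  obtain ⟨C, hC, hbound⟩ := hψ.exists_norm_symbol_le ha
  refine ⟨C, hC, fun μ hμ s ↦ (hbound μ hμ s).trans ?_⟩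
  have hμ_le : 1 + μ ≤ 1 + s ^ 2 + μ := by linarith [sq_nonneg s]
  have hs_le : 1 + s ^ 2 ≤ 1 + s ^ 2 + μ := by linarith
  have weights_le : (1 + μ) ^ N * (1 + s ^ 2) ≤ (1 + s ^ 2 + μ) ^ (N + 1) := by
    rw [pow_succ (1 + s ^ 2 + μ)]
    gcongr
  rw [mul_assoc, ← mul_inv]
  gcongr

lemma integrable_symbol (hψ : IsFlatAmplitude ψ) (ha : a ∈ symbolSpace ψ (N + 1)) {μ : ℝ}
    (hμ : 0 < μ) : Integrable (a μ) := by
  obtain ⟨C, -, hbound⟩ := hψ.exists_norm_symbol_succ_le ha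
  exact (integrable_inv_one_add_sq.const_mul _).mono'
    (hψ.continuous_symbol ha hμ).aestronglyMeasurable (.of_forall (hbound μ hμ))

lemma tendsto_symbol_cocompact (hψ : IsFlatAmplitude ψ) (ha : a ∈ symbolSpace ψ (N + 1)) {μ : ℝ}
    (hμ : 0 < μ) : Tendsto (a μ) (cocompact ℝ) (𝓝 0) := by
  obtain ⟨C, -, hbound⟩ := hψ.exists_norm_symbol_succ_le ha
  refine squeeze_zero_norm (hbound μ hμ) ?_
  have sq_tendsto : Tendsto (fun s : ℝ ↦ 1 + s ^ 2) (cocompact ℝ) atTop := by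
    simpa using tendsto_atTop_add_const_left _ 1
      ((tendsto_pow_atTop two_ne_zero).comp (tendsto_norm_cocompact_atTop (E := ℝ)))
  simpa using sq_tendsto.inv_tendsto_atTop.const_mul (C * ((1 + μ) ^ N)⁻¹)

end IsFlatAmplitude

/-- The phase `t³ / 3 + x t` of the Airy integral in the rescaled variable `s = ε t`, with
`δ = ε³` and `μ = 1 + ε² x`, so that its derivative is `δ⁻¹ (s² - 1 + μ)`. -/
noncomputable def scaledAiryPhase (δ μ s : ℝ) : ℝ :=
  δ⁻¹ * (s ^ 3 / 3 + (μ - 1) * s)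

lemma hasDerivAt_scaledAiryPhase (δ μ s : ℝ) :
    HasDerivAt (scaledAiryPhase δ μ) (δ⁻¹ * (s ^ 2 - 1 + μ)) s := by
  refine ((((hasDerivAt_pow 3 s).div_const 3).add
    ((hasDerivAt_id s).const_mul (μ - 1))).const_mul δ⁻¹).congr_deriv ?_
  push_cast
  ring

lemma continuous_scaledAiryPhase (δ μ : ℝ) : Continuous (scaledAiryPhase δ μ) := by
  unfold scaledAiryPhase
  fun_prop

lemma scaledAiryPhase_mul {ε : ℝ} (hε : ε ≠ 0) (x t : ℝ) :
    scaledAiryPhase (ε ^ 3) (1 + ε ^ 2 * x) (ε * t) = t ^ 3 / 3 + x * t := by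
  unfold scaledAiryPhase
  field_simp
  ring

namespace IsFlatAmplitude

open Complex

variable {ψ : ℝ → ℂ} {N : ℕ} {a : ℝ → ℝ → ℂ}

lemma exists_symbol_tendsto_integral (hψ : IsFlatAmplitude ψ) (ha : a ∈ symbolSpace ψ N) :
    ∃ c ∈ symbolSpace ψ (N + 1), ∀ δ μ : ℝ, 0 < δ → 0 < μ →
      Tendsto (fun R : ℝ ↦ ∫ s in -R..R, exp (I * scaledAiryPhase δ μ s) * a μ s) atTop
        (𝓝 (δ * I * ∫ s, exp (I * scaledAiryPhase δ μ s) * c μ s)) := by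
  obtain ⟨b, hb, a_eq⟩ := hψ.exists_symbol_div ha
  obtain ⟨c, hc, hderiv⟩ := hψ.exists_symbol_hasDerivAt hb
  refine ⟨c, hc, fun δ μ hδ hμ ↦ ?_⟩
  have hb_lim := hψ.tendsto_symbol_cocompact hb hμ
  have by_parts := tendsto_integral_exp_I_mul_deriv_mul (hasDerivAt_scaledAiryPhase δ μ)
    (hderiv μ hμ) (by fun_prop) (hψ.continuous_symbol hc hμ) (hψ.integrable_symbol hc hμ)
    (hb_lim.mono_left atTop_le_cocompact) (hb_lim.mono_left atBot_le_cocompact)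
  rw [mul_assoc]
  refine (by_parts.const_mul (δ : ℂ)).congr fun R ↦ ?_
  rw [← intervalIntegral.integral_const_mul]
  congr 1 with s
  have hδ' : (δ : ℂ) ≠ 0 := mod_cast hδ.ne'
  rw [a_eq μ hμ s, real_smul]
  push_cast
  field_simp

lemma exists_symbol_tendsto_integral_pow (hψ : IsFlatAmplitude ψ) (ha : a ∈ symbolSpace ψ N)
    (k : ℕ) :
    ∃ c ∈ symbolSpace ψ (N + k + 1), ∀ δ μ : ℝ, 0 < δ → 0 < μ →
      Tendsto (fun R : ℝ ↦ ∫ s in -R..R, exp (I * scaledAiryPhase δ μ s) * a μ s) atTop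
        (𝓝 ((δ * I) ^ (k + 1) * ∫ s, exp (I * scaledAiryPhase δ μ s) * c μ s)) := by
  induction k with
  | zero => simpa using hψ.exists_symbol_tendsto_integral ha
  | succ k ih =>
    obtain ⟨c, hc, hlim⟩ := ih
    obtain ⟨d, hd, hlim_c⟩ := hψ.exists_symbol_tendsto_integral hc
    refine ⟨d, hd, fun δ μ hδ hμ ↦ ?_⟩
    have hc_int := integrable_exp_I_mul_mul (continuous_scaledAiryPhase δ μ)
      (hψ.integrable_symbol hc hμ)
    have integral_c_eq := tendsto_nhds_unique (hlim_c δ μ hδ hμ)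
      (intervalIntegral_tendsto_integral hc_int tendsto_neg_atTop_atBot tendsto_id)
    rw [pow_succ, mul_assoc, integral_c_eq]
    exact hlim δ μ hδ hμ

lemma exists_norm_integral_symbol_le (hψ : IsFlatAmplitude ψ) (ha : a ∈ symbolSpace ψ (N + 1)) :
    ∃ C, 0 ≤ C ∧ ∀ (θ : ℝ → ℝ) (μ : ℝ), 0 < μ →
      ‖∫ s, exp (I * θ s) * a μ s‖ ≤ C * ((1 + μ) ^ N)⁻¹ := by
  obtain ⟨C, hC, hbound⟩ := hψ.exists_norm_symbol_succ_le ha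
  refine ⟨C * Real.pi, by positivity, fun θ μ hμ ↦ ?_⟩
  calc ‖∫ s, exp (I * θ s) * a μ s‖
      ≤ ∫ s : ℝ, C * ((1 + μ) ^ N)⁻¹ * (1 + s ^ 2)⁻¹ :=
        norm_integral_le_of_norm_le (integrable_inv_one_add_sq.const_mul _) <|
          .of_forall fun s ↦ by
            rw [norm_mul, norm_exp_I_mul_ofReal, one_mul]
            exact hbound μ hμ s
    _ = C * Real.pi * ((1 + μ) ^ N)⁻¹ := by
        rw [integral_const_mul, integral_univ_inv_one_add_sq]
        ring

theorem exists_tendsto_integral_norm_le (hψ : IsFlatAmplitude ψ) (k : ℕ) :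
    ∃ C, 0 ≤ C ∧ ∀ δ μ : ℝ, 0 < δ → 0 < μ → ∃ L : ℂ,
      Tendsto (fun R : ℝ ↦ ∫ s in -R..R, exp (I * scaledAiryPhase δ μ s) * ψ s) atTop (𝓝 L) ∧
        ‖L‖ ≤ C * (δ ^ (k + 1) * ((1 + μ) ^ k)⁻¹) := by
  have hψ_mem : (fun _ ↦ ψ) ∈ symbolSpace ψ 0 := by
    have hatom : symbolAtom ψ 0 0 0 = fun _ ↦ ψ := by
      ext μ s
      simp [symbolAtom]
    exact hatom ▸ symbolAtom_mem_symbolSpace ψ le_rfl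
  obtain ⟨c, hc, hlim⟩ := hψ.exists_symbol_tendsto_integral_pow hψ_mem k
  rw [zero_add] at hc
  obtain ⟨C, hC, hbound⟩ := hψ.exists_norm_integral_symbol_le hc
  refine ⟨C, hC, fun δ μ hδ hμ ↦ ⟨_, hlim δ μ hδ hμ, ?_⟩⟩
  rw [norm_mul, norm_pow, norm_mul, norm_I, mul_one, norm_real, Real.norm_of_nonneg hδ.le,
    mul_left_comm]
  gcongr
  exact hbound _ μ hμ

end IsFlatAmplitude

lemma eventually_integral_eq_integral_of_hasCompactSupport {E : Type*} [NormedAddCommGroup E]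
    [NormedSpace ℝ E] {f : ℝ → E} (hf : HasCompactSupport f) :
    ∀ᶠ R : ℝ in atTop, ∫ t in -R..R, f t = ∫ t, f t := by
  obtain ⟨r, hr⟩ := hf.isCompact.isBounded.subset_closedBall 0
  filter_upwards [eventually_gt_atTop r] with R hR
  refine intervalIntegral.integral_eq_integral_of_support_subset fun t ht ↦ ?_
  have ht_le : |t| ≤ r := by simpa using hr (subset_tsupport f ht)
  exact ⟨(abs_lt.mp (ht_le.trans_lt hR)).1, (abs_le.mp (ht_le.trans hR.le)).2⟩

lemma integral_exp_I_mul_eq_cos_of_odd {θ : ℝ → ℝ} (hθ : Continuous θ) (hodd : θ.Odd) (R : ℝ) :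
    ∫ t in -R..R, Complex.exp (Complex.I * θ t) =
      ((2 * ∫ t in (0 : ℝ)..R, Real.cos (θ t) : ℝ) : ℂ) := by
  have hint (p q : ℝ) : IntervalIntegrable (fun t ↦ Complex.exp (Complex.I * θ t)) volume p q :=
    Continuous.intervalIntegrable (by fun_prop) p q
  have reflect : ∫ t in -R..0, Complex.exp (Complex.I * θ t) =
      ∫ t in (0 : ℝ)..R, Complex.exp (Complex.I * θ (-t)) := by
    rw [intervalIntegral.integral_comp_neg (fun t ↦ Complex.exp (Complex.I * θ t)), neg_zero]
  rw [← intervalIntegral.integral_add_adjacent_intervals (hint (-R) 0) (hint 0 R), reflect,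
    ← intervalIntegral.integral_add (Continuous.intervalIntegrable (by fun_prop) 0 R) (hint 0 R),
    ← intervalIntegral.integral_const_mul, ← intervalIntegral.integral_ofReal]
  congr 1 with t
  rw [hodd t, Complex.ofReal_mul, Complex.ofReal_cos, Complex.cos]
  push_cast
  ring_nf

section Cutoff

variable {χ : ℝ → ℂ}

lemma isFlatAmplitude_one_sub (hχ : ContDiff ℝ ∞ χ) (hsupp : HasCompactSupport χ)
    (hone : ∀ t ∈ Set.Icc (-1 : ℝ) 1, χ t = 1) : IsFlatAmplitude fun s ↦ 1 - χ s where
  contDiff := contDiff_const.sub hχ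
  eq_zero s hs := by rw [hone s (abs_le.mp hs), sub_self]
  bounded j := by
    have hsupp_deriv : HasCompactSupport (iteratedDeriv j χ) := by
      induction j with
      | zero => simpa using hsupp
      | succ j ih => simpa [iteratedDeriv_succ] using ih.deriv
    obtain ⟨C, hC⟩ := hsupp_deriv.exists_bound_of_continuous
      (hχ.continuous_iteratedDeriv j (mod_cast le_top))
    rcases j.eq_zero_or_pos with rfl | hj
    · refine ⟨1 + C, fun s ↦ ?_⟩
      rw [iteratedDeriv_zero] at hC ⊢
      exact norm_sub_le_of_le norm_one.le (hC s)
    · exact ⟨C, fun s ↦ by simpa [iteratedDeriv_const_sub hj] using hC s⟩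

lemma tendsto_integral_exp_airyPhase (hχ : Continuous χ) (hsupp : HasCompactSupport χ)
    {ε x : ℝ} {L : ℂ} (hε : 0 < ε)
    (hL : Tendsto (fun R : ℝ ↦ ∫ s in -R..R,
      Complex.exp (Complex.I * scaledAiryPhase (ε ^ 3) (1 + ε ^ 2 * x) s) * (1 - χ s))
      atTop (𝓝 L)) :
    Tendsto (fun R : ℝ ↦ ∫ t in -R..R, Complex.exp (Complex.I * (t ^ 3 / 3 + x * t : ℝ))) atTop
      (𝓝 ((∫ t : ℝ, Complex.exp (Complex.I * (t ^ 3 / 3 + x * t : ℝ)) * χ (ε * t)) +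
        (ε⁻¹ : ℝ) * L)) := by
  have hcomp : HasCompactSupport fun t : ℝ ↦
      Complex.exp (Complex.I * (t ^ 3 / 3 + x * t : ℝ)) * χ (ε * t) :=
    (hsupp.comp_smul hε.ne').mul_left
  refine (((hL.comp (tendsto_id.const_mul_atTop hε)).const_mul _).const_add _).congr' ?_
  filter_upwards [eventually_integral_eq_integral_of_hasCompactSupport hcomp] with R hR
  have rescale := intervalIntegral.integral_comp_mul_left (a := -R) (b := R)
    (fun s ↦ Complex.exp (Complex.I * scaledAiryPhase (ε ^ 3) (1 + ε ^ 2 * x) s) * (1 - χ s))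
    hε.ne'
  rw [Complex.real_smul, mul_neg] at rescale
  rw [Function.comp_apply, id, ← hR, ← rescale, ← intervalIntegral.integral_add
    (Continuous.intervalIntegrable (by fun_prop) _ _)
    (Continuous.intervalIntegrable (by unfold scaledAiryPhase; fun_prop) _ _)]
  congr 1 with t
  rw [scaledAiryPhase_mul hε.ne']
  ring

end Cutoff

lemma one_add_sq_mul_pos {ε x : ℝ} (hε : 0 < ε) (hx : -ε⁻¹ ^ 2 < x) : 0 < 1 + ε ^ 2 * x := by
  have : 1 + ε ^ 2 * x = ε ^ 2 * (ε⁻¹ ^ 2 + x) := by field_simp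
  rw [this]
  exact mul_pos (by positivity) (by linarith)

lemma integral_exp_airyPhase_eq_cos (x R : ℝ) :
    ∫ t in -R..R, Complex.exp (Complex.I * (t ^ 3 / 3 + x * t : ℝ)) =
      ((2 * ∫ t in (0 : ℝ)..R, Real.cos (t ^ 3 / 3 + x * t) : ℝ) : ℂ) :=
  integral_exp_I_mul_eq_cos_of_odd (by fun_prop) (fun t ↦ by ring) R

theorem tendsto_airy (x : ℝ) :
    Tendsto (fun R : ℝ ↦ (1 / Real.pi) * ∫ t in (0 : ℝ)..R, Real.cos (t ^ 3 / 3 + x * t))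
      atTop (𝓝 (Airy x)) := by
  let bump : ContDiffBump (0 : ℝ) := ⟨1, 2, one_pos, one_lt_two⟩
  have hχ : ContDiff ℝ ∞ fun t ↦ (bump t : ℂ) := Complex.ofRealCLM.contDiff.comp bump.contDiff
  have hsupp : HasCompactSupport fun t ↦ (bump t : ℂ) :=
    bump.hasCompactSupport.comp_left Complex.ofReal_zero
  have hone : ∀ t ∈ Set.Icc (-1 : ℝ) 1, (bump t : ℂ) = 1 := fun t ht ↦ mod_cast
    bump.one_of_mem_closedBall (by simpa [bump] using abs_le.mpr ht)
  obtain ⟨ε, hε, hx⟩ : ∃ ε : ℝ, 0 < ε ∧ -ε⁻¹ ^ 2 < x := by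
    refine ⟨(1 + |x|)⁻¹, by positivity, ?_⟩
    rw [inv_inv]
    nlinarith [neg_abs_le x, abs_nonneg x]
  obtain ⟨C, -, hC⟩ := (isFlatAmplitude_one_sub hχ hsupp hone).exists_tendsto_integral_norm_le 0
  obtain ⟨L, hL, -⟩ := hC (ε ^ 3) (1 + ε ^ 2 * x) (by positivity) (one_add_sq_mul_pos hε hx)
  have hlim := (Complex.continuous_re.tendsto _).comp
    (tendsto_integral_exp_airyPhase hχ.continuous hsupp hε hL)
  refine tendsto_nhds_limUnder ⟨_, (hlim.const_mul (1 / (2 * Real.pi))).congr fun R ↦ ?_⟩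
  rw [Function.comp_apply, integral_exp_airyPhase_eq_cos, Complex.ofReal_re]
  field_simp

lemma tendsto_integral_exp_airyPhase_airy (x : ℝ) :
    Tendsto (fun R : ℝ ↦ ∫ t in -R..R, Complex.exp (Complex.I * (t ^ 3 / 3 + x * t : ℝ))) atTop
      (𝓝 ((2 * Real.pi * Airy x : ℝ) : ℂ)) := by
  refine ((Complex.continuous_ofReal.tendsto _).comp
    ((tendsto_airy x).const_mul (2 * Real.pi))).congr fun R ↦ ?_
  rw [Function.comp_apply, integral_exp_airyPhase_eq_cos]
  congr 1
  field_simp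

lemma truncation_bound_rescale {ε x C : ℝ} (hε : 0 < ε) (hx : -ε⁻¹ ^ 2 < x) (hC : 0 ≤ C) (k : ℕ) :
    ε⁻¹ * (C * ((ε ^ 3) ^ (k + 1) * ((1 + (1 + ε ^ 2 * x)) ^ k)⁻¹)) ≤
      C * (ε ^ (k + 2) * ((ε⁻¹ ^ 2 + x) ^ k)⁻¹) := by
  have hpos : 0 < ε⁻¹ ^ 2 + x := by linarith
  have hμ : ε ^ 2 * (ε⁻¹ ^ 2 + x) ≤ 1 + (1 + ε ^ 2 * x) := by
    have : ε ^ 2 * (ε⁻¹ ^ 2 + x) = 1 + ε ^ 2 * x := by field_simp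
    linarith
  calc ε⁻¹ * (C * ((ε ^ 3) ^ (k + 1) * ((1 + (1 + ε ^ 2 * x)) ^ k)⁻¹))
      ≤ ε⁻¹ * (C * ((ε ^ 3) ^ (k + 1) * ((ε ^ 2 * (ε⁻¹ ^ 2 + x)) ^ k)⁻¹)) := by gcongr
    _ = C * (ε ^ (k + 2) * ((ε⁻¹ ^ 2 + x) ^ k)⁻¹) := by
        rw [mul_pow]
        field_simp
        ring

theorem airy_truncation_general (χ : ℝ → ℂ) (hχ : ContDiff ℝ ∞ χ) (hsupp : HasCompactSupport χ)
    (hone : ∀ t ∈ Set.Icc (-1 : ℝ) 1, χ t = 1) :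
    (∀ x : ℝ, Tendsto
        (fun R : ℝ ↦ (1 / Real.pi) * ∫ t in (0 : ℝ)..R, Real.cos (t ^ 3 / 3 + x * t))
        atTop (𝓝 (Airy x))) ∧
    ∀ k : ℕ, ∃ C : ℝ, 0 < C ∧ ∀ ε : ℝ, 0 < ε → ∀ x : ℝ, -ε⁻¹ ^ 2 < x →
      ‖(((2 * Real.pi)⁻¹ : ℝ) : ℂ) *
            (∫ t : ℝ, Complex.exp (Complex.I * ((t ^ 3 / 3 + x * t : ℝ) : ℂ)) * χ (ε * t)) -
          ((Airy x : ℝ) : ℂ)‖ ≤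
        C * (ε ^ (k + 2) * ((ε⁻¹ ^ 2 + x) ^ k)⁻¹) := by
  refine ⟨tendsto_airy, fun k ↦ ?_⟩
  obtain ⟨C, hC, hbound⟩ :=
    (isFlatAmplitude_one_sub hχ hsupp hone).exists_tendsto_integral_norm_le k
  refine ⟨C + 1, by positivity, fun ε hε x hx ↦ ?_⟩
  obtain ⟨L, hL, hL_le⟩ := hbound _ _ (pow_pos hε 3) (one_add_sq_mul_pos hε hx)
  have airy_eq := tendsto_nhds_unique (tendsto_integral_exp_airyPhase_airy x)
    (tendsto_integral_exp_airyPhase hχ.continuous hsupp hε hL)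
  set J := ∫ t : ℝ, Complex.exp (Complex.I * ((t ^ 3 / 3 + x * t : ℝ) : ℂ)) * χ (ε * t)
  have error_eq : (((2 * Real.pi)⁻¹ : ℝ) : ℂ) * J - (Airy x : ℂ) =
      -(((2 * Real.pi)⁻¹ * ε⁻¹ : ℝ) * L) := by
    have hJ : J = (2 * Real.pi * Airy x : ℝ) - (ε⁻¹ : ℝ) * L := eq_sub_of_add_eq airy_eq.symm
    have hpi : (Real.pi : ℂ) ≠ 0 := mod_cast Real.pi_ne_zero
    rw [hJ]
    push_cast
    field_simp
    ring
  have inv_two_pi_le : (2 * Real.pi)⁻¹ ≤ 1 := inv_le_one_of_one_le₀ (by linarith [Real.pi_gt_three])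
  have hpos : 0 < ε⁻¹ ^ 2 + x := by linarith
  calc ‖(((2 * Real.pi)⁻¹ : ℝ) : ℂ) * J - (Airy x : ℂ)‖ = (2 * Real.pi)⁻¹ * (ε⁻¹ * ‖L‖) := by
        rw [error_eq, norm_neg, norm_mul, Complex.norm_real, Real.norm_of_nonneg (by positivity),
          mul_assoc]
    _ ≤ 1 * (ε⁻¹ * (C * ((ε ^ 3) ^ (k + 1) * ((1 + (1 + ε ^ 2 * x)) ^ k)⁻¹))) := by gcongr
    _ ≤ C * (ε ^ (k + 2) * ((ε⁻¹ ^ 2 + x) ^ k)⁻¹) := by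
        rw [one_mul]
        exact truncation_bound_rescale hε hx hC k
    _ ≤ (C + 1) * (ε ^ (k + 2) * ((ε⁻¹ ^ 2 + x) ^ k)⁻¹) := by
        gcongr
        linarith

/-- the improper integral defining the Airy function converges for every
`x`, and the smoothly truncated oscillatory integral
`(2π)^{-1} ∫ e^{i(t³/3 + xt)} χ(εt) dt` approximates `Ai(x)` up to
`C_k (ε^{-2} + x)^{-k}` for every `k ≥ 1`, uniformly for `ε ∈ (0,1]` and `x > −ε^{-2}`. -/
theorem airy_truncation
    (χ : ℝ → ℝ) (hχ : ContDiff ℝ (⊤ : ℕ∞) χ)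
    (hχ01 : ∀ t, χ t ∈ Set.Icc (0 : ℝ) 1)
    (hχone : ∀ t ∈ Set.Icc (-1 : ℝ) 1, χ t = 1)
    (hχzero : ∀ t, t ∉ Set.Icc (-2 : ℝ) 2 → χ t = 0) :
    (∀ x : ℝ, Tendsto
        (fun R : ℝ => (1 / Real.pi) * ∫ t in (0 : ℝ)..R, Real.cos (t ^ 3 / 3 + x * t))
        atTop (𝓝 (Airy x))) ∧
    ∀ k : ℕ, 1 ≤ k → ∃ C : ℝ, 0 < C ∧
      ∀ ε ∈ Set.Ioc (0 : ℝ) 1, ∀ x : ℝ, -ε⁻¹ ^ 2 < x →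
        ‖(((2 * Real.pi)⁻¹ : ℝ) : ℂ) *
              (∫ t : ℝ, Complex.exp (Complex.I * ((t ^ 3 / 3 + x * t : ℝ) : ℂ)) *
                ((χ (ε * t) : ℝ) : ℂ)) -
            ((Airy x : ℝ) : ℂ)‖ ≤
          C * ((ε⁻¹ ^ 2 + x) ^ k)⁻¹ := by
  obtain ⟨converges, approximates⟩ := airy_truncation_general (fun t ↦ (χ t : ℂ))
    (Complex.ofRealCLM.contDiff.comp hχ)
    (HasCompactSupport.intro isCompact_Icc fun t ht ↦ by rw [hχzero t ht, Complex.ofReal_zero])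
    (fun t ht ↦ by rw [hχone t ht, Complex.ofReal_one])
  refine ⟨converges, fun k _ ↦ ?_⟩
  obtain ⟨C, hC, hbound⟩ := approximates k
  refine ⟨C, hC, fun ε hε x hx ↦ (hbound ε hε.1 x hx).trans ?_⟩
  have : 0 < ε⁻¹ ^ 2 + x := by linarith
  gcongr
  exact mul_le_of_le_one_left (by positivity) (pow_le_one₀ hε.1.le hε.2)
end

section
/- Let n ≥ 1 and k ∈ ℕ. There exists a constant C_k > 0 such that for every Schwartz function f : ℝⁿ → ℂ and every ħ ∈ (0,1]: ‖f‖_{C^{2k}} ≤ C_k · ħ^{−2k − n/2} · ‖ (1 − ħ²Δ)^{k + ⌊n/4⌋ + 1} f ‖_{L²(ℝⁿ)}. -/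
open MeasureTheory
open scoped ENNReal

/-- The Euclidean Laplacian `Δf = Σ_i ∂²f/∂x_i²`. -/
noncomputable def laplacianC {n : ℕ} (f : EuclideanSpace ℝ (Fin n) → ℂ)
    (x : EuclideanSpace ℝ (Fin n)) : ℂ :=
  ∑ i : Fin n,
    fderiv ℝ (fun y => fderiv ℝ f y (EuclideanSpace.single i 1)) x
      (EuclideanSpace.single i 1)

/-- The map `f ↦ (1 − ħ²Δ) f`. -/
noncomputable def helmholtzOp {n : ℕ} (hbar : ℝ)
    (f : EuclideanSpace ℝ (Fin n) → ℂ) : EuclideanSpace ℝ (Fin n) → ℂ :=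
  fun x => f x - (hbar ^ 2 : ℝ) • laplacianC f x

/-- Partial derivative in the `i`-th coordinate direction. -/
noncomputable def pderivE {n : ℕ} (i : Fin n)
    (f : EuclideanSpace ℝ (Fin n) → ℂ) : EuclideanSpace ℝ (Fin n) → ℂ :=
  fun x => fderiv ℝ f x (EuclideanSpace.single i 1)

/-- Multi-index partial derivative `∂^α f`. -/
noncomputable def mderivE {n : ℕ} (α : Fin n → ℕ)
    (f : EuclideanSpace ℝ (Fin n) → ℂ) : EuclideanSpace ℝ (Fin n) → ℂ :=
  (List.finRange n).foldr (fun i g => (pderivE i)^[α i] g) f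

/-- The finite set of multi-indices `α : Fin n → ℕ` with `|α| = Σ_i α_i = j`. -/
def multiIndices (n j : ℕ) : Finset (Fin n → ℕ) :=
  (Fintype.piFinset fun _ : Fin n => Finset.range (j + 1)).filter
    fun α => ∑ i, α i = j

/-- `‖f‖_{C^k} = sup_x Σ_{|α| ≤ k} |∂^α f(x)|`. -/
noncomputable def CkNorm {n : ℕ} (k : ℕ)
    (f : EuclideanSpace ℝ (Fin n) → ℂ) : ℝ :=
  ⨆ x : EuclideanSpace ℝ (Fin n),
    ∑ j ∈ Finset.range (k + 1), ∑ α ∈ multiIndices n j, ‖mderivE α f x‖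

/-!
On the Fourier side `1 - ħ²Δ` is multiplication by `1 + ‖2πħξ‖²`, while a derivative of order
`j ≤ 2k` costs at most `(2π‖ξ‖) ^ j ≤ ħ⁻ʲ (1 + ‖2πħξ‖²) ^ k`. Hence `𝓕 (∂^α f)` is dominated by
`ħ⁻ʲ (1 + ‖2πħξ‖²) ^ (-r)` times the Fourier transform of `(1 - ħ²Δ) ^ (k + r) f`. The weight is
square integrable as soon as `n < 4r`, with `L²` norm proportional to `ħ ^ (-n / 2)`, so the
Cauchy-Schwarz inequality and Plancherel's theorem bound the `L¹` norm of `𝓕 (∂^α f)`, and thereby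
`∂^α f` uniformly. The least admissible `r` is `⌊n / 4⌋ + 1`.
-/

open Module Real
open scoped FourierTransform LineDeriv Laplacian SchwartzMap

theorem pow_le_one_add_sq_pow {t : ℝ} (ht : 0 ≤ t) {j k : ℕ} (hjk : j ≤ 2 * k) :
    t ^ j ≤ (1 + t ^ 2) ^ k := by
  rcases le_total t 1 with t_le_one | one_le_t
  · exact (pow_le_one₀ ht t_le_one).trans (one_le_pow₀ (le_add_of_nonneg_right (sq_nonneg t)))
  · calc t ^ j ≤ t ^ (2 * k) := pow_le_pow_right₀ one_le_t hjk
      _ = (t ^ 2) ^ k := pow_mul t 2 k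
      _ ≤ (1 + t ^ 2) ^ k := by gcongr; exact le_add_of_nonneg_left zero_le_one

section Scaling

variable {E G : Type*} [NormedAddCommGroup E] [NormedSpace ℝ E] [FiniteDimensional ℝ E]
  [MeasurableSpace E] [BorelSpace E] [NormedAddCommGroup G]

theorem eLpNorm_comp_const_smul (μ : Measure E) [μ.IsAddHaarMeasure] (f : E → G) (p : ℝ≥0∞)
    {c : ℝ} (hc : 0 < c) :
    eLpNorm (fun x ↦ f (c • x)) p μ =
      ENNReal.ofReal (c ^ (-(finrank ℝ E : ℝ) / p.toReal)) * eLpNorm f p μ := by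
  have smul_embedding : MeasurableEmbedding (c • · : E → E) :=
    (Homeomorph.smulOfNeZero c hc.ne').measurableEmbedding
  have jacobian_rpow : ENNReal.ofReal |(c ^ finrank ℝ E)⁻¹| ^ (1 / p).toReal =
      ENNReal.ofReal (c ^ (-(finrank ℝ E : ℝ) / p.toReal)) := by
    rw [abs_of_pos (by positivity), ENNReal.ofReal_rpow_of_nonneg (by positivity) (by positivity),
      ← rpow_natCast, ← rpow_neg hc.le, ← rpow_mul hc.le, one_div, ENNReal.toReal_inv,
      ← div_eq_mul_inv]
  have scaled_measure_ne_zero : ENNReal.ofReal |(c ^ finrank ℝ E)⁻¹| ≠ 0 := by positivity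
  calc eLpNorm (fun x ↦ f (c • x)) p μ
      = eLpNorm f p (μ.map (c • ·)) := (smul_embedding.eLpNorm_map_measure).symm
    _ = _ := by
      rw [Measure.map_addHaar_smul μ hc.ne', eLpNorm_smul_measure_of_ne_zero scaled_measure_ne_zero,
        jacobian_rpow, smul_eq_mul]

end Scaling

section BesselWeight

variable {E F : Type*} [NormedAddCommGroup E] [InnerProductSpace ℝ E] [FiniteDimensional ℝ E]
  [MeasurableSpace E] [BorelSpace E] [NormedAddCommGroup F] [NormedSpace ℝ F]

theorem memLp_two_one_add_norm_sq_rpow_neg {r : ℝ} (hr : finrank ℝ E < 4 * r) :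
    MemLp (fun ξ : E ↦ (1 + ‖ξ‖ ^ 2) ^ (-r)) 2 volume := by
  have weight_continuous : Continuous fun ξ : E ↦ (1 + ‖ξ‖ ^ 2) ^ (-r) :=
    Continuous.rpow_const (by fun_prop) fun ξ ↦ .inl (by positivity)
  rw [memLp_two_iff_integrable_sq weight_continuous.aestronglyMeasurable]
  refine (integrable_rpow_neg_one_add_norm_sq (r := 4 * r) hr).congr (.of_forall fun ξ ↦ ?_)
  dsimp only
  rw [← rpow_mul_natCast (by positivity)]
  congr 1
  push_cast
  ring

theorem eLpNorm_one_one_add_norm_sq_rpow_neg_smul_le (r : ℝ) {c : ℝ} (hc : 0 < c) {g : E → F}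
    (hg : AEStronglyMeasurable g volume) :
    eLpNorm (fun ξ ↦ (1 + ‖c • ξ‖ ^ 2) ^ (-r) • g ξ) 1 volume ≤
      ENNReal.ofReal (c ^ (-(finrank ℝ E : ℝ) / 2)) *
        eLpNorm (fun ξ : E ↦ (1 + ‖ξ‖ ^ 2) ^ (-r)) 2 volume * eLpNorm g 2 volume := by
  have dilated_weight_measurable :
      AEStronglyMeasurable (fun ξ : E ↦ (1 + ‖c • ξ‖ ^ 2) ^ (-r)) volume :=
    (Continuous.rpow_const (by fun_prop) fun ξ ↦ .inl (by positivity)).aestronglyMeasurable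
  have dilated_weight_norm :=
    eLpNorm_comp_const_smul volume (fun ξ : E ↦ (1 + ‖ξ‖ ^ 2) ^ (-r)) 2 hc
  rw [ENNReal.toReal_ofNat] at dilated_weight_norm
  rw [← dilated_weight_norm]
  exact eLpNorm_smul_le_mul_eLpNorm hg dilated_weight_measurable

end BesselWeight

section FourierSide

variable {E F : Type*} [NormedAddCommGroup E] [InnerProductSpace ℝ E] [FiniteDimensional ℝ E]
  [MeasurableSpace E] [BorelSpace E] [NormedAddCommGroup F]

section Symbols

variable [NormedSpace ℂ F]

theorem fourier_lineDerivOp_apply (v : E) (f : 𝓢(E, F)) (ξ : E) :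
    𝓕 (∂_{v} f) ξ = (2 * π * Complex.I) • inner ℝ ξ v • 𝓕 f ξ := by
  rw [SchwartzMap.fourier_lineDerivOp_eq, _root_.smul_apply,
    SchwartzMap.smulLeftCLM_apply_apply (by fun_prop)]

theorem norm_fourier_lineDerivOp_le (v : E) (f : 𝓢(E, F)) (ξ : E) :
    ‖𝓕 (∂_{v} f) ξ‖ ≤ ‖v‖ * (2 * π * ‖ξ‖) * ‖𝓕 f ξ‖ := by
  have norm_two_pi_I : ‖(2 * π * Complex.I : ℂ)‖ = 2 * π := by simp [abs_of_pos pi_pos]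
  calc ‖𝓕 (∂_{v} f) ξ‖ = 2 * π * (‖inner ℝ ξ v‖ * ‖𝓕 f ξ‖) := by
        rw [fourier_lineDerivOp_apply, norm_smul, norm_smul, norm_two_pi_I]
    _ ≤ 2 * π * (‖ξ‖ * ‖v‖ * ‖𝓕 f ξ‖) := by
        gcongr
        exact norm_inner_le_norm ξ v
    _ = ‖v‖ * (2 * π * ‖ξ‖) * ‖𝓕 f ξ‖ := by ring

theorem norm_fourier_iteratedLineDerivOp_le {j : ℕ} (v : Fin j → E) (f : 𝓢(E, F)) (ξ : E) :
    ‖𝓕 (∂^{v} f) ξ‖ ≤ (∏ i, ‖v i‖) * (2 * π * ‖ξ‖) ^ j * ‖𝓕 f ξ‖ := by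
  induction j with
  | zero => simp
  | succ j ih =>
    calc ‖𝓕 (∂^{v} f) ξ‖
        ≤ ‖v 0‖ * (2 * π * ‖ξ‖) * ‖𝓕 (∂^{Fin.tail v} f) ξ‖ := by
          rw [LineDeriv.iteratedLineDerivOp_succ_left]
          exact norm_fourier_lineDerivOp_le _ _ _
      _ ≤ ‖v 0‖ * (2 * π * ‖ξ‖) *
            ((∏ i, ‖Fin.tail v i‖) * (2 * π * ‖ξ‖) ^ j * ‖𝓕 f ξ‖) := by
          gcongr
          exact ih _
      _ = (∏ i, ‖v i‖) * (2 * π * ‖ξ‖) ^ (j + 1) * ‖𝓕 f ξ‖ := by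
          rw [Fin.prod_univ_succ, pow_succ]
          simp only [Fin.tail]
          ring

theorem fourier_laplacian_apply [CompleteSpace F] (f : 𝓢(E, F)) (ξ : E) :
    𝓕 (Δ f) ξ = -((2 * π) ^ 2 * ‖ξ‖ ^ 2) • 𝓕 f ξ := by
  have norm_sq_temperate : (fun ξ : E ↦ ‖ξ‖ ^ 2).HasTemperateGrowth := by fun_prop
  rw [SchwartzMap.laplacian_eq_fourierMultiplierCLM, SchwartzMap.fourierMultiplierCLM_apply,
    FourierTransform.fourier_smul, FourierTransform.fourier_fourierInv_eq, _root_.smul_apply,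
    SchwartzMap.smulLeftCLM_apply_apply norm_sq_temperate, smul_smul, neg_mul]

/-- The semiclassical Helmholtz operator `1 - ħ²Δ` on Schwartz space. -/
noncomputable def schwartzHelmholtz (ħ : ℝ) (f : 𝓢(E, F)) : 𝓢(E, F) :=
  f - ħ ^ 2 • Δ f

theorem fourier_schwartzHelmholtz_apply [CompleteSpace F] (ħ : ℝ) (f : 𝓢(E, F)) (ξ : E) :
    𝓕 (schwartzHelmholtz ħ f) ξ = (1 + ‖(2 * π * ħ) • ξ‖ ^ 2) • 𝓕 f ξ := by
  have fourier_linear : 𝓕 (schwartzHelmholtz ħ f) = 𝓕 f - ħ ^ 2 • 𝓕 (Δ f) := by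
    rw [schwartzHelmholtz, sub_eq_add_neg, FourierTransform.fourier_add,
      FourierTransform.fourier_neg, FourierTransform.fourier_smul, ← sub_eq_add_neg]
  have norm_sq_dilated : ‖(2 * π * ħ) • ξ‖ ^ 2 = ħ ^ 2 * ((2 * π) ^ 2 * ‖ξ‖ ^ 2) := by
    rw [norm_smul, mul_pow, norm_eq_abs, sq_abs]
    ring
  rw [fourier_linear, _root_.sub_apply, _root_.smul_apply, fourier_laplacian_apply, smul_smul,
    norm_sq_dilated, add_smul, one_smul, mul_neg, neg_smul, sub_neg_eq_add]

theorem fourier_iterate_schwartzHelmholtz_apply [CompleteSpace F] (ħ : ℝ) (m : ℕ) (f : 𝓢(E, F))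
    (ξ : E) :
    𝓕 ((schwartzHelmholtz ħ)^[m] f) ξ = (1 + ‖(2 * π * ħ) • ξ‖ ^ 2) ^ m • 𝓕 f ξ := by
  induction m with
  | zero => simp
  | succ m ih =>
    rw [Function.iterate_succ_apply', fourier_schwartzHelmholtz_apply, ih, smul_smul, ← pow_succ']

theorem norm_fourier_iteratedLineDerivOp_le_schwartzHelmholtz [CompleteSpace F] {ħ : ℝ}
    (hħ : 0 < ħ) {j k : ℕ} (hjk : j ≤ 2 * k) (r : ℕ) (v : Fin j → E) (f : 𝓢(E, F)) (ξ : E) :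
    ‖𝓕 (∂^{v} f) ξ‖ ≤ ((∏ i, ‖v i‖) * ħ ^ (-j : ℝ)) *
      ‖(1 + ‖(2 * π * ħ) • ξ‖ ^ 2) ^ (-r : ℝ) • 𝓕 ((schwartzHelmholtz ħ)^[k + r] f) ξ‖ := by
  set t := ‖(2 * π * ħ) • ξ‖ with t_def
  have two_pi_norm_pow : (2 * π * ‖ξ‖) ^ j = ħ ^ (-j : ℝ) * t ^ j := by
    rw [t_def, norm_smul, norm_of_nonneg (by positivity), rpow_neg hħ.le, rpow_natCast,
      show 2 * π * ħ * ‖ξ‖ = ħ * (2 * π * ‖ξ‖) by ring, mul_pow ħ,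
      inv_mul_cancel_left₀ (by positivity)]
  have helmholtz_norm : ‖(1 + t ^ 2) ^ (-r : ℝ) • 𝓕 ((schwartzHelmholtz ħ)^[k + r] f) ξ‖ =
      (1 + t ^ 2) ^ k * ‖𝓕 f ξ‖ := by
    rw [fourier_iterate_schwartzHelmholtz_apply, smul_smul, ← t_def, rpow_neg (by positivity),
      rpow_natCast, pow_add, mul_comm, mul_inv_cancel_right₀ (by positivity), norm_smul,
      norm_of_nonneg (by positivity)]
  calc ‖𝓕 (∂^{v} f) ξ‖ ≤ (∏ i, ‖v i‖) * (2 * π * ‖ξ‖) ^ j * ‖𝓕 f ξ‖ :=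
        norm_fourier_iteratedLineDerivOp_le v f ξ
    _ = (∏ i, ‖v i‖) * ħ ^ (-j : ℝ) * (t ^ j * ‖𝓕 f ξ‖) := by rw [two_pi_norm_pow]; ring
    _ ≤ (∏ i, ‖v i‖) * ħ ^ (-j : ℝ) * ((1 + t ^ 2) ^ k * ‖𝓕 f ξ‖) := by
        gcongr
        exact pow_le_one_add_sq_pow (norm_nonneg _) hjk
    _ = _ := by rw [helmholtz_norm]

theorem enorm_apply_le_eLpNorm_fourier_one [CompleteSpace F] (g : 𝓢(E, F)) (x : E) :
    ‖g x‖ₑ ≤ eLpNorm (𝓕 g : 𝓢(E, F)) 1 volume := by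
  have fourier_fourier_neg : 𝓕 (𝓕 g) (-x) = g x := by
    rw [SchwartzMap.fourier_coe, ← Real.fourierInv_eq_fourier_neg, ← SchwartzMap.fourierInv_coe,
      FourierTransform.fourierInv_fourier_eq]
  have norm_le : ‖g x‖ ≤ ‖(𝓕 g).toLp 1 volume‖ := by
    simpa only [fourier_fourier_neg] using
      SchwartzMap.norm_fourier_apply_le_toLp_one (𝓕 g) (-x)
  rw [SchwartzMap.norm_toLp, ← toReal_enorm] at norm_le
  exact (ENNReal.toReal_le_toReal enorm_ne_top ((𝓕 g).memLp 1 volume).eLpNorm_ne_top).1 norm_le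

end Symbols

section SobolevEmbedding

variable [InnerProductSpace ℂ F] [CompleteSpace F]

theorem eLpNorm_fourier_two (f : 𝓢(E, F)) :
    eLpNorm (𝓕 f : 𝓢(E, F)) 2 volume = eLpNorm f 2 volume := by
  have plancherel := SchwartzMap.norm_fourier_toL2_eq f
  rw [SchwartzMap.norm_toLp, SchwartzMap.norm_toLp] at plancherel
  exact (ENNReal.toReal_eq_toReal_iff' ((𝓕 f).memLp 2 volume).eLpNorm_ne_top
    (f.memLp 2 volume).eLpNorm_ne_top).1 plancherel

theorem enorm_apply_le_of_norm_fourier_le (r : ℝ) {c K : ℝ} (hc : 0 < c) {g G : 𝓢(E, F)}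
    (hgG : ∀ ξ, ‖𝓕 g ξ‖ ≤ K * ‖(1 + ‖c • ξ‖ ^ 2) ^ (-r) • 𝓕 G ξ‖) (x : E) :
    ‖g x‖ₑ ≤ ENNReal.ofReal K * (ENNReal.ofReal (c ^ (-(finrank ℝ E : ℝ) / 2)) *
      eLpNorm (fun ξ : E ↦ (1 + ‖ξ‖ ^ 2) ^ (-r)) 2 volume * eLpNorm G 2 volume) :=
  calc ‖g x‖ₑ ≤ eLpNorm (𝓕 g : 𝓢(E, F)) 1 volume := enorm_apply_le_eLpNorm_fourier_one g x
    _ ≤ ENNReal.ofReal K * eLpNorm (fun ξ ↦ (1 + ‖c • ξ‖ ^ 2) ^ (-r) • 𝓕 G ξ) 1 volume :=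
        eLpNorm_le_mul_eLpNorm_of_ae_le_mul (.of_forall hgG) 1
    _ ≤ _ := by
        rw [← eLpNorm_fourier_two G]
        gcongr
        exact eLpNorm_one_one_add_norm_sq_rpow_neg_smul_le r hc
          (𝓕 G).continuous.aestronglyMeasurable

variable (E F) in
theorem exists_norm_iteratedLineDerivOp_le_schwartzHelmholtz {r : ℕ} (hr : finrank ℝ E < 4 * r) :
    ∃ C : ℝ, 0 ≤ C ∧ ∀ (f : 𝓢(E, F)) {ħ : ℝ}, 0 < ħ → ∀ {j k : ℕ}, j ≤ 2 * k →
      ∀ (v : Fin j → E) (x : E), ‖∂^{v} f x‖ ≤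
        C * (∏ i, ‖v i‖) * ħ ^ (-j - finrank ℝ E / 2 : ℝ) *
          ‖((schwartzHelmholtz ħ)^[k + r] f).toLp 2 volume‖ := by
  set W := eLpNorm (fun ξ : E ↦ (1 + ‖ξ‖ ^ 2) ^ (-r : ℝ)) 2 volume with W_def
  refine ⟨(2 * π) ^ (-(finrank ℝ E : ℝ) / 2) * W.toReal, by positivity,
    fun f ħ hħ j k hjk v x ↦ ?_⟩
  have W_ne_top : W ≠ ⊤ :=
    (memLp_two_one_add_norm_sq_rpow_neg (by exact_mod_cast hr)).eLpNorm_ne_top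
  have bound := enorm_apply_le_of_norm_fourier_le r (by positivity : 0 < 2 * π * ħ)
    (norm_fourier_iteratedLineDerivOp_le_schwartzHelmholtz hħ hjk r v f) x
  have helmholtz_ne_top := (((schwartzHelmholtz ħ)^[k + r] f).memLp 2 volume).eLpNorm_ne_top
  replace bound := ENNReal.toReal_mono (by finiteness) bound
  rw [toReal_enorm, ENNReal.toReal_mul, ENNReal.toReal_mul, ENNReal.toReal_mul,
    ENNReal.toReal_ofReal (by positivity), ENNReal.toReal_ofReal (by positivity), ← W_def,
    ← SchwartzMap.norm_toLp, mul_rpow (by positivity) hħ.le] at bound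
  refine bound.trans_eq ?_
  rw [sub_eq_add_neg, rpow_add hħ, ← neg_div]
  ring

end SobolevEmbedding

end FourierSide

section Coordinates

variable {n : ℕ}

theorem coe_lineDerivOp_single (i : Fin n) (f : 𝓢(EuclideanSpace ℝ (Fin n), ℂ)) :
    ⇑(∂_{EuclideanSpace.single i (1 : ℝ)} f : 𝓢(EuclideanSpace ℝ (Fin n), ℂ)) = pderivE i f := by
  ext x
  exact SchwartzMap.lineDerivOp_apply_eq_fderiv _ _ _

theorem coe_schwartzHelmholtz (ħ : ℝ) (f : 𝓢(EuclideanSpace ℝ (Fin n), ℂ)) :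
    ⇑(schwartzHelmholtz ħ f) = helmholtzOp ħ f := by
  have coe_laplacian : ⇑(Δ f : 𝓢(EuclideanSpace ℝ (Fin n), ℂ)) = laplacianC f := by
    ext x
    rw [SchwartzMap.laplacian_eq_sum (EuclideanSpace.basisFun (Fin n) ℝ), _root_.sum_apply]
    simp only [EuclideanSpace.basisFun_apply, coe_lineDerivOp_single]
    rfl
  ext x
  rw [schwartzHelmholtz, _root_.sub_apply, _root_.smul_apply, coe_laplacian, helmholtzOp]

theorem coe_iterate_schwartzHelmholtz (ħ : ℝ) (m : ℕ) (f : 𝓢(EuclideanSpace ℝ (Fin n), ℂ)) :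
    ⇑((schwartzHelmholtz ħ)^[m] f) = (helmholtzOp ħ)^[m] f :=
  Function.Semiconj.iterate_right (f := DFunLike.coe) (coe_schwartzHelmholtz ħ) m f

/-- The list of unit coordinate vectors, the `i`-th one repeated `α i` times, along which one
differentiates successively to form `∂^α`. -/
noncomputable def multiIndexDirections (α : Fin n → ℕ) : List (EuclideanSpace ℝ (Fin n)) :=
  (List.finRange n).flatMap fun i ↦ List.replicate (α i) (EuclideanSpace.single i 1)

theorem length_multiIndexDirections (α : Fin n → ℕ) :
    (multiIndexDirections α).length = ∑ i, α i := by
  simp [multiIndexDirections, List.length_flatMap, Fin.sum_univ_def]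

theorem norm_get_multiIndexDirections (α : Fin n → ℕ) (i : Fin (multiIndexDirections α).length) :
    ‖(multiIndexDirections α).get i‖ = 1 := by
  obtain ⟨l, -, hl⟩ := List.mem_flatMap.1 (List.get_mem (multiIndexDirections α) i)
  rw [List.eq_of_mem_replicate hl]
  simp

theorem foldr_lineDerivOp {V S : Type*} [LineDeriv V S S] (l : List V) (f : S) :
    l.foldr (fun v g ↦ ∂_{v} g) f = ∂^{l.get} f := by
  induction l with
  | nil => rfl
  | cons v l ih =>
    rw [List.foldr_cons, ih]
    rfl

theorem coe_iteratedLineDerivOp_multiIndexDirections (α : Fin n → ℕ)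
    (f : 𝓢(EuclideanSpace ℝ (Fin n), ℂ)) :
    ⇑(∂^{(multiIndexDirections α).get} f : 𝓢(EuclideanSpace ℝ (Fin n), ℂ)) = mderivE α f := by
  have coe_foldr_replicate (i : Fin n) (m : ℕ) (g : 𝓢(EuclideanSpace ℝ (Fin n), ℂ)) :
      ⇑((List.replicate m (EuclideanSpace.single i (1 : ℝ))).foldr (fun v g ↦ ∂_{v} g) g) =
        (pderivE i)^[m] g := by
    induction m with
    | zero => rfl
    | succ m ih =>
      rw [List.replicate_succ, List.foldr_cons, coe_lineDerivOp_single, ih,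
        Function.iterate_succ_apply']
  rw [← foldr_lineDerivOp, multiIndexDirections, List.foldr_flatMap, mderivE]
  induction List.finRange n with
  | nil => rfl
  | cons i l ih => rw [List.foldr_cons, List.foldr_cons, coe_foldr_replicate, ih]

theorem exists_CkNorm_le_of_norm_mderivE_le (n k : ℕ) :
    ∃ N : ℕ, ∀ {f : EuclideanSpace ℝ (Fin n) → ℂ} {B : ℝ},
      (∀ α : Fin n → ℕ, ∑ i, α i ≤ k → ∀ x, ‖mderivE α f x‖ ≤ B) → CkNorm k f ≤ N * B := by
  refine ⟨∑ j ∈ Finset.range (k + 1), (multiIndices n j).card, fun {f B} hB ↦ ciSup_le fun x ↦ ?_⟩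
  calc ∑ j ∈ Finset.range (k + 1), ∑ α ∈ multiIndices n j, ‖mderivE α f x‖
      ≤ ∑ j ∈ Finset.range (k + 1), ∑ _ ∈ multiIndices n j, B := by
        gcongr with j hj α hα
        have order_eq : ∑ i, α i = j := (Finset.mem_filter.1 hα).2
        exact hB α (order_eq.trans_le (Finset.mem_range_succ_iff.1 hj)) x
    _ = _ := by simp only [Finset.sum_const, nsmul_eq_mul, Nat.cast_sum, Finset.sum_mul]

theorem exists_norm_mderivE_le_helmholtzOp (n : ℕ) {r : ℕ} (hr : n < 4 * r) :
    ∃ C : ℝ, 0 ≤ C ∧ ∀ (f : 𝓢(EuclideanSpace ℝ (Fin n), ℂ)), ∀ ħ ∈ Set.Ioc (0 : ℝ) 1,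
      ∀ (k : ℕ) (α : Fin n → ℕ), ∑ i, α i ≤ 2 * k → ∀ x, ‖mderivE α f x‖ ≤
        C * ħ ^ (-(2 * k : ℝ) - (n : ℝ) / 2) *
          (eLpNorm ((helmholtzOp ħ)^[k + r] f) 2 volume).toReal := by
  obtain ⟨C, C_nonneg, hC⟩ := exists_norm_iteratedLineDerivOp_le_schwartzHelmholtz
    (EuclideanSpace ℝ (Fin n)) ℂ (r := r) (by rwa [finrank_euclideanSpace_fin])
  refine ⟨C, C_nonneg, fun f ħ ⟨ħ_pos, ħ_le_one⟩ k α hα x ↦ ?_⟩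
  have bound := hC f ħ_pos ((length_multiIndexDirections α).trans_le hα)
    (multiIndexDirections α).get x
  simp only [norm_get_multiIndexDirections, Finset.prod_const_one, mul_one] at bound
  rw [coe_iteratedLineDerivOp_multiIndexDirections, SchwartzMap.norm_toLp,
    coe_iterate_schwartzHelmholtz, length_multiIndexDirections, finrank_euclideanSpace_fin] at bound
  refine bound.trans ?_
  gcongr ?_ * ?_ * _
  exact rpow_le_rpow_of_exponent_ge ħ_pos ħ_le_one (by gcongr; exact_mod_cast hα)

end Coordinates

/-- free semiclassical elliptic estimate
`‖f‖_{C^{2k}} ≤ C ħ^{−2k−n/2} ‖(1 − ħ²Δ)^{k+⌊n/4⌋+1} f‖_{L²}` for Schwartz `f`. -/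
theorem elliptic_estimate_free
    (n : ℕ) (hn : 1 ≤ n) (k : ℕ) :
    ∃ C : ℝ, 0 < C ∧
      ∀ f : SchwartzMap (EuclideanSpace ℝ (Fin n)) ℂ,
      ∀ hbar ∈ Set.Ioc (0 : ℝ) 1,
        ENNReal.ofReal (CkNorm (2 * k) ⇑f) ≤
          ENNReal.ofReal (C * hbar ^ (-(2 * k : ℝ) - (n : ℝ) / 2)) *
            eLpNorm ((helmholtzOp hbar)^[k + n / 4 + 1] ⇑f) 2
              (volume : Measure (EuclideanSpace ℝ (Fin n))) := by
  obtain ⟨A, A_nonneg, hA⟩ := exists_norm_mderivE_le_helmholtzOp n (r := n / 4 + 1) (by lia)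
  obtain ⟨N, hN⟩ := exists_CkNorm_le_of_norm_mderivE_le n (2 * k)
  refine ⟨N * A + 1, by positivity, fun f ħ hħ ↦ ?_⟩
  have ħ_pos : 0 < ħ := hħ.1
  rw [add_assoc k]
  have norm_ne_top : eLpNorm ((helmholtzOp ħ)^[k + (n / 4 + 1)] f) 2 volume ≠ ⊤ := by
    rw [← coe_iterate_schwartzHelmholtz]
    exact (SchwartzMap.memLp _ 2 volume).eLpNorm_ne_top
  set L := eLpNorm ((helmholtzOp ħ)^[k + (n / 4 + 1)] f) 2 volume
  rw [← ENNReal.ofReal_toReal norm_ne_top, ← ENNReal.ofReal_mul (by positivity)]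
  apply ENNReal.ofReal_le_ofReal
  calc CkNorm (2 * k) f ≤ N * (A * ħ ^ (-(2 * k : ℝ) - (n : ℝ) / 2) * L.toReal) :=
        hN (hA f ħ hħ k)
    _ = N * A * ħ ^ (-(2 * k : ℝ) - (n : ℝ) / 2) * L.toReal := by ring
    _ ≤ (N * A + 1) * ħ ^ (-(2 * k : ℝ) - (n : ℝ) / 2) * L.toReal := by
        gcongr
        exact le_add_of_nonneg_right zero_le_one
end

section
/- Let n ≥ 1, let Ω ⊂ ℝⁿ be a bounded open set, and let V : ℝⁿ → ℝ satisfy V(x) ≥ 1 for all x and be C^∞ on an open neighborhood of the closure of Ω. Then for every k ∈ ℕ there exists a constant C_k > 0 such that for every C^∞ function f : ℝⁿ → ℂ with compact support contained in Ω and every ħ ∈ (0,1]: ‖ (1 − ħ²Δ)^k f ‖_{L²(ℝⁿ)} ≤ C_k · ‖ (V − ħ²Δ)^k f ‖_{L²(ℝⁿ)}. -/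
open MeasureTheory
open scoped ENNReal

/-- The map `f ↦ (V − ħ²Δ) f`. -/
noncomputable def schrodingerOp {n : ℕ} (hbar : ℝ)
    (V : EuclideanSpace ℝ (Fin n) → ℝ)
    (f : EuclideanSpace ℝ (Fin n) → ℂ) : EuclideanSpace ℝ (Fin n) → ℂ :=
  fun x => V x • f x - (hbar ^ 2 : ℝ) • laplacianC f x

/-!
Write `H = 1 - ħ²Δ` and `A = V - ħ²Δ`. Integration by parts gives the energy estimate
`c ‖f‖² + ‖ħ∇f‖² ≤ ⟪f, A f⟫` as soon as `V ≥ c` on the support of `f`. Hence `c ‖f‖ ≤ ‖A f‖`, and,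
with `V = 1`, both `‖f‖` and `‖ħ∂ᵢf‖` are at most `‖H f‖`.

Commuting `H` past the multiplication by a smooth function `W` produces only the terms `ħ²(ΔW) f`
and `2ħ ∑ᵢ (∂ᵢW)(ħ∂ᵢf)`, which are controlled by `H f`. By induction on `m`, multiplication by `W`
is therefore bounded for the norm `‖H ^ m ·‖`, uniformly for bounded `ħ`.

Since `H = A + (1 - V)`, this yields
`‖H ^ (k + 1) f‖ ≤ ‖H ^ k (A f)‖ + C ‖H ^ k f‖`. By induction on `k` both terms are bounded through
`‖A ^ (k + 1) f‖`, the second because `‖A ^ k f‖ ≤ c⁻¹ ‖A ^ (k + 1) f‖`. All these operators are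
local, so `V` may be replaced by a Schwartz function that agrees with it on the support of `f`.
-/

open SchwartzMap LineDeriv Laplacian
open scoped ContDiff RealInnerProductSpace

theorem seminorm_pow_apply_le_prod_mul {X : Type*} [AddCommGroup X] [Module ℝ X]
    (p : Seminorm ℝ X) {H A : Module.End ℝ X} {S : Set X} (hS : Set.MapsTo A S S)
    {c : ℝ} (hc : 0 ≤ c) (hA : ∀ g ∈ S, p g ≤ c * p (A g))
    {C : ℕ → ℝ} (hC : ∀ m, 0 ≤ C m)
    (hAH : ∀ m f, p ((H ^ m) ((H - A) f)) ≤ C m * p ((H ^ m) f))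
    (k : ℕ) {f : X} (hf : f ∈ S) :
    p ((H ^ k) f) ≤ (∏ m ∈ Finset.range k, (1 + C m * c)) * p ((A ^ k) f) := by
  induction k generalizing f with
  | zero => simp
  | succ k ih =>
    set P := ∏ m ∈ Finset.range k, (1 + C m * c)
    have hAf : (A ^ k) (A f) = (A ^ (k + 1)) f := by rw [pow_succ, Module.End.mul_apply]
    have hAk : p ((A ^ k) f) ≤ c * p ((A ^ (k + 1)) f) := by
      rw [pow_succ', Module.End.mul_apply]
      exact hA _ (Module.End.pow_apply A k f ▸ hS.iterate k hf)
    have hP0 : 0 ≤ P := Finset.prod_nonneg fun m _ =>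
      add_nonneg zero_le_one (mul_nonneg (hC m) hc)
    calc p ((H ^ (k + 1)) f)
        = p ((H ^ k) (A f) + (H ^ k) ((H - A) f)) := by
          rw [pow_succ, Module.End.mul_apply, ← map_add, LinearMap.sub_apply, add_sub_cancel]
      _ ≤ p ((H ^ k) (A f)) + p ((H ^ k) ((H - A) f)) := map_add_le_add p _ _
      _ ≤ P * p ((A ^ (k + 1)) f) + C k * (P * (c * p ((A ^ (k + 1)) f))) := by
          refine add_le_add (hAf ▸ ih (hS hf)) ((hAH k f).trans ?_)
          have := hC k
          gcongr
          exact (ih hf).trans (by gcongr)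
      _ = (∏ m ∈ Finset.range (k + 1), (1 + C m * c)) * p ((A ^ (k + 1)) f) := by
          rw [Finset.prod_range_succ]
          ring

section Schwartz

variable {E F : Type*} [NormedAddCommGroup E] [NormedAddCommGroup F]

section Derivatives

variable [NormedSpace ℝ E] [NormedSpace ℝ F]

theorem lineDerivOp_comm (v w : E) (f : 𝓢(E, F)) : ∂_{v} (∂_{w} f) = ∂_{w} (∂_{v} f) := by
  have hd (x : E) : DifferentiableAt ℝ (fderiv ℝ f) x :=
    (fderivCLM ℝ E F f).differentiableAt
  have second_deriv (a b : E) (x : E) : ∂_{a} (∂_{b} f) x = fderiv ℝ (fderiv ℝ f) x a b := by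
    change fderiv ℝ (fun y => fderiv ℝ f y b) x a = _
    rw [fderiv_clm_apply (hd x) (differentiableAt_const b)]
    simp
  ext x
  rw [second_deriv, second_deriv]
  refine (f.contDiffAt ⊤).isSymmSndFDerivAt ?_ v w
  rw [minSmoothness_of_isRCLikeNormedField]
  exact WithTop.coe_le_coe.2 (le_top (a := (2 : ℕ∞)))

theorem lineDerivOp_smulLeftCLM (v : E) (W : 𝓢(E, ℝ)) (f : 𝓢(E, F)) :
    ∂_{v} (smulLeftCLM F W f) =
      smulLeftCLM F (∂_{v} W : 𝓢(E, ℝ)) f + smulLeftCLM F W (∂_{v} f) := by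
  ext x
  rw [lineDerivOp_apply_eq_fderiv, smulLeftCLM_apply W.hasTemperateGrowth,
    fderiv_fun_smul W.differentiableAt f.differentiableAt]
  simp [SchwartzMap.hasTemperateGrowth, lineDerivOp_apply_eq_fderiv, add_comm]

end Derivatives

variable [InnerProductSpace ℝ E] [FiniteDimensional ℝ E]

section Laplacian

variable [NormedSpace ℝ F]

theorem lineDerivOp_laplacian (v : E) (f : 𝓢(E, F)) : ∂_{v} (Δ f) = Δ (∂_{v} f) := by
  simp only [laplacian_eq_sum (stdOrthonormalBasis ℝ E), lineDerivOp_sum, lineDerivOp_comm v]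

theorem laplacian_smulLeftCLM {ι : Type*} [Fintype ι] (b : OrthonormalBasis ι ℝ E)
    (W : 𝓢(E, ℝ)) (f : 𝓢(E, F)) :
    Δ (smulLeftCLM F W f) = smulLeftCLM F (Δ W : 𝓢(E, ℝ)) f +
      (2 : ℝ) • ∑ i, smulLeftCLM F (∂_{b i} W : 𝓢(E, ℝ)) (∂_{b i} f) + smulLeftCLM F W (Δ f) := by
  ext x
  simp only [laplacian_eq_sum b, lineDerivOp_smulLeftCLM, lineDerivOp_add]
  simp only [add_apply, sum_apply, SchwartzMap.hasTemperateGrowth, smulLeftCLM_apply_apply,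
    Finset.sum_add_distrib, two_smul, map_sum, Finset.sum_smul]
  abel

theorem tsupport_laplacian_subset (f : 𝓢(E, F)) : tsupport (Δ f : 𝓢(E, F)) ⊆ tsupport f := by
  refine closure_minimal (fun x hx => ?_) (isClosed_tsupport f)
  contrapose! hx
  rw [Function.notMem_support, laplacian_eq_sum (stdOrthonormalBasis ℝ E), sum_apply]
  refine Finset.sum_eq_zero fun i _ => image_eq_zero_of_notMem_tsupport fun h => hx ?_
  exact ((tsupport_lineDerivOp_subset _ _).trans (tsupport_lineDerivOp_subset _ _)) h

/-- The semiclassical Schrödinger operator `v - ħ²Δ` on Schwartz functions; the Helmholtz operator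
`1 - ħ²Δ` is the case `v = 1`. The multiplication `smulLeftCLM F v` is `0` if `v` does not have
temperate growth. -/
noncomputable def schwartzSchrodinger (ħ : ℝ) (v : E → ℝ) : Module.End ℝ 𝓢(E, F) :=
  (smulLeftCLM F v - ħ ^ 2 • laplacianCLM ℝ E 𝓢(E, F)).toLinearMap

theorem schwartzSchrodinger_apply (ħ : ℝ) (v : E → ℝ) (f : 𝓢(E, F)) :
    schwartzSchrodinger ħ v f = smulLeftCLM F v f - ħ ^ 2 • Δ f := rfl

theorem schwartzSchrodinger_one_apply (ħ : ℝ) (f : 𝓢(E, F)) :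
    schwartzSchrodinger ħ 1 f = f - ħ ^ 2 • Δ f := by
  rw [schwartzSchrodinger_apply, Pi.one_def, smulLeftCLM_const, one_smul]
  rfl

theorem tsupport_schwartzSchrodinger_subset (ħ : ℝ) (v : E → ℝ) (f : 𝓢(E, F)) :
    tsupport (schwartzSchrodinger ħ v f) ⊆ tsupport f := by
  refine (tsupport_sub (smulLeftCLM F v f) (ħ ^ 2 • Δ f)).trans (Set.union_subset ?_ ?_)
  · exact (tsupport_smulLeftCLM_subset v f).trans Set.inter_subset_left
  · exact (tsupport_smul_subset_right _ _).trans (tsupport_laplacian_subset f)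

theorem lineDerivOp_schwartzSchrodinger_one_pow (ħ : ℝ) (m : ℕ) (v : E) (f : 𝓢(E, F)) :
    ∂_{v} ((schwartzSchrodinger ħ 1 ^ m) f) = (schwartzSchrodinger ħ 1 ^ m) (∂_{v} f) := by
  have commute : Commute (lineDerivOpCLM ℝ 𝓢(E, F) v).toLinearMap (schwartzSchrodinger ħ 1) := by
    ext1 f
    simp only [Module.End.mul_apply, schwartzSchrodinger_one_apply, map_sub, map_smul,
      ContinuousLinearMap.coe_coe, lineDerivOpCLM_apply, lineDerivOp_laplacian]
  exact LinearMap.congr_fun (commute.pow_right m) f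

theorem schwartzSchrodinger_one_smulLeftCLM {ι : Type*} [Fintype ι] (b : OrthonormalBasis ι ℝ E)
    (ħ : ℝ) (W : 𝓢(E, ℝ)) (f : 𝓢(E, F)) :
    schwartzSchrodinger ħ 1 (smulLeftCLM F W f) =
      smulLeftCLM F W (schwartzSchrodinger ħ 1 f) - ħ ^ 2 • smulLeftCLM F (Δ W : 𝓢(E, ℝ)) f
        - (2 * ħ) • ∑ i, smulLeftCLM F (∂_{b i} W : 𝓢(E, ℝ)) (ħ • ∂_{b i} f) := by
  simp only [schwartzSchrodinger_one_apply, laplacian_smulLeftCLM b, map_sub, map_smul,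
    ← Finset.smul_sum]
  module

end Laplacian

section L2

variable [InnerProductSpace ℝ F] [MeasurableSpace E] [BorelSpace E]
  (μ : Measure E) [μ.IsAddHaarMeasure]

/-- The `L²(μ)` norm of Schwartz functions as a seminorm on the real vector space `𝓢(E, F)`, so
that it can be composed with powers of endomorphisms of `𝓢(E, F)`. -/
noncomputable def l2Seminorm : Seminorm ℝ 𝓢(E, F) :=
  (normSeminorm ℝ (Lp F 2 μ)).comp (toLpCLM ℝ F 2 μ).toLinearMap

theorem l2Seminorm_apply (f : 𝓢(E, F)) : l2Seminorm μ f = ‖f.toLp 2 μ‖ := rfl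

theorem ofReal_l2Seminorm (f : 𝓢(E, F)) : ENNReal.ofReal (l2Seminorm μ f) = eLpNorm f 2 μ := by
  rw [l2Seminorm_apply, norm_toLp, ENNReal.ofReal_toReal (f.memLp 2 μ).2.ne]

theorem l2Seminorm_smulLeftCLM_le {W : E → ℝ} (hW : W.HasTemperateGrowth) {C : ℝ}
    (hC : ∀ x, ‖W x‖ ≤ C) (f : 𝓢(E, F)) :
    l2Seminorm μ (smulLeftCLM F W f) ≤ C * l2Seminorm μ f := by
  rw [l2Seminorm_apply, l2Seminorm_apply]
  refine Lp.norm_le_mul_norm_of_ae_le_mul ?_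
  filter_upwards [(smulLeftCLM F W f).coeFn_toLp 2 μ, f.coeFn_toLp 2 μ] with x hWf hf
  rw [hWf, hf, smulLeftCLM_apply_apply hW, norm_smul]
  gcongr
  exact hC x

theorem inner_toLp_two_eq_integral (f g : 𝓢(E, F)) :
    ⟪f.toLp 2 μ, g.toLp 2 μ⟫ = ∫ x, ⟪f x, g x⟫ ∂μ := by
  refine integral_congr_ae ?_
  filter_upwards [f.coeFn_toLp 2 μ, g.coeFn_toLp 2 μ] with x hf hg
  rw [hf, hg]

theorem integrable_inner_schwartz (f g : 𝓢(E, F)) : Integrable (fun x => ⟪f x, g x⟫) μ :=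
  (pairing (innerSL ℝ) f g).integrable

theorem mul_sq_l2Seminorm_le_inner_smulLeftCLM {v : E → ℝ} (hv : v.HasTemperateGrowth) {c : ℝ}
    {f : 𝓢(E, F)} (hc : ∀ x ∈ tsupport f, c ≤ v x) :
    c * l2Seminorm μ f ^ 2 ≤ ⟪f.toLp 2 μ, (smulLeftCLM F v f).toLp 2 μ⟫ := by
  rw [l2Seminorm_apply, ← real_inner_self_eq_norm_sq, inner_toLp_two_eq_integral,
    inner_toLp_two_eq_integral, ← integral_const_mul]
  refine integral_mono ((integrable_inner_schwartz μ f f).const_mul c)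
    (integrable_inner_schwartz μ f _) fun x => ?_
  simp only [smulLeftCLM_apply_apply hv, real_inner_smul_right]
  by_cases hx : x ∈ tsupport f
  · exact mul_le_mul_of_nonneg_right (hc x hx) real_inner_self_nonneg
  · simp [image_eq_zero_of_notMem_tsupport hx]

theorem inner_toLp_lineDerivOp_right (f g : 𝓢(E, F)) (v : E) :
    ⟪f.toLp 2 μ, (∂_{v} g).toLp 2 μ⟫ = -⟪(∂_{v} f).toLp 2 μ, g.toLp 2 μ⟫ := by
  simp only [inner_toLp_two_eq_integral]
  exact integral_bilinear_lineDerivOp_right_eq_neg_left f g (innerSL ℝ) v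

variable {ι : Type*} [Fintype ι] (b : OrthonormalBasis ι ℝ E)

theorem inner_toLp_laplacian_self (f : 𝓢(E, F)) :
    ⟪f.toLp 2 μ, (Δ f).toLp 2 μ⟫ = -∑ i, l2Seminorm μ (∂_{b i} f) ^ 2 := by
  rw [laplacian_eq_sum b, ← toLpCLM_apply (𝕜 := ℝ) (f := ∑ i, _), map_sum, inner_sum,
    ← Finset.sum_neg_distrib]
  refine Finset.sum_congr rfl fun i _ => ?_
  rw [toLpCLM_apply, inner_toLp_lineDerivOp_right, real_inner_self_eq_norm_sq, l2Seminorm_apply]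

theorem energy_le_l2Seminorm_mul_l2Seminorm (ħ : ℝ) {v : E → ℝ} (hv : v.HasTemperateGrowth)
    {c : ℝ} {f : 𝓢(E, F)} (hc : ∀ x ∈ tsupport f, c ≤ v x) :
    c * l2Seminorm μ f ^ 2 + ħ ^ 2 * ∑ i, l2Seminorm μ (∂_{b i} f) ^ 2 ≤
      l2Seminorm μ f * l2Seminorm μ (schwartzSchrodinger ħ v f) := by
  calc c * l2Seminorm μ f ^ 2 + ħ ^ 2 * ∑ i, l2Seminorm μ (∂_{b i} f) ^ 2
      ≤ ⟪f.toLp 2 μ, (smulLeftCLM F v f).toLp 2 μ⟫ - ħ ^ 2 * ⟪f.toLp 2 μ, (Δ f).toLp 2 μ⟫ := by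
        rw [inner_toLp_laplacian_self μ b]
        linarith [mul_sq_l2Seminorm_le_inner_smulLeftCLM μ hv hc]
    _ = ⟪f.toLp 2 μ, (schwartzSchrodinger ħ v f).toLp 2 μ⟫ := by
        rw [schwartzSchrodinger_apply, ← real_inner_smul_right, ← inner_sub_right]
        rfl
    _ ≤ l2Seminorm μ f * l2Seminorm μ (schwartzSchrodinger ħ v f) := real_inner_le_norm _ _

theorem mul_l2Seminorm_le_l2Seminorm_schwartzSchrodinger (ħ : ℝ) {v : E → ℝ}
    (hv : v.HasTemperateGrowth) {c : ℝ} {f : 𝓢(E, F)} (hc : ∀ x ∈ tsupport f, c ≤ v x) :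
    c * l2Seminorm μ f ≤ l2Seminorm μ (schwartzSchrodinger ħ v f) := by
  rcases (apply_nonneg (l2Seminorm μ) f).eq_or_lt with hf | hf
  · simp [← hf]
  have energy := energy_le_l2Seminorm_mul_l2Seminorm μ (stdOrthonormalBasis ℝ E) ħ hv hc
  have kinetic_nonneg : 0 ≤ ħ ^ 2 * ∑ i, l2Seminorm μ (∂_{stdOrthonormalBasis ℝ E i} f) ^ 2 :=
    mul_nonneg (sq_nonneg ħ) (Finset.sum_nonneg fun i _ => sq_nonneg _)
  have : (c * l2Seminorm μ f) * l2Seminorm μ f ≤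
      l2Seminorm μ (schwartzSchrodinger ħ v f) * l2Seminorm μ f := by
    linarith
  exact le_of_mul_le_mul_right this hf

theorem l2Seminorm_le_l2Seminorm_schwartzSchrodinger_one (ħ : ℝ) (f : 𝓢(E, F)) :
    l2Seminorm μ f ≤ l2Seminorm μ (schwartzSchrodinger ħ 1 f) := by
  simpa only [one_mul] using mul_l2Seminorm_le_l2Seminorm_schwartzSchrodinger μ ħ (v := 1) (c := 1)
    (f := f) (.const 1) fun _ _ => le_rfl

theorem l2Seminorm_smul_lineDerivOp_le (ħ : ℝ) (i : ι) (f : 𝓢(E, F)) :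
    l2Seminorm μ (ħ • ∂_{b i} f) ≤ l2Seminorm μ (schwartzSchrodinger ħ 1 f) := by
  set N := l2Seminorm μ (schwartzSchrodinger ħ 1 f)
  have energy : l2Seminorm μ f ^ 2 + ħ ^ 2 * ∑ j, l2Seminorm μ (∂_{b j} f) ^ 2 ≤
      l2Seminorm μ f * N := by
    simpa only [one_mul] using energy_le_l2Seminorm_mul_l2Seminorm μ b ħ (v := 1) (c := 1)
      (f := f) (.const 1) fun _ _ => le_rfl
  refine (sq_le_sq₀ (apply_nonneg _ _) (apply_nonneg _ _)).1 ?_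
  calc l2Seminorm μ (ħ • ∂_{b i} f) ^ 2
      = ħ ^ 2 * l2Seminorm μ (∂_{b i} f) ^ 2 := by
        rw [map_smul_eq_mul, mul_pow, Real.norm_eq_abs, sq_abs]
    _ ≤ ħ ^ 2 * ∑ j, l2Seminorm μ (∂_{b j} f) ^ 2 := by
        gcongr
        exact Finset.single_le_sum (f := fun j => l2Seminorm μ (∂_{b j} f) ^ 2)
          (fun j _ => sq_nonneg _) (Finset.mem_univ i)
    _ ≤ l2Seminorm μ f * N := by linarith [sq_nonneg (l2Seminorm μ f)]
    _ ≤ N ^ 2 := by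
        rw [sq]
        gcongr
        exact l2Seminorm_le_l2Seminorm_schwartzSchrodinger_one μ ħ f

theorem l2Seminorm_schwartzSchrodinger_one_pow_le_succ (ħ : ℝ) (m : ℕ) (f : 𝓢(E, F)) :
    l2Seminorm μ ((schwartzSchrodinger ħ 1 ^ m) f) ≤
      l2Seminorm μ ((schwartzSchrodinger ħ 1 ^ (m + 1)) f) := by
  rw [pow_succ', Module.End.mul_apply]
  exact l2Seminorm_le_l2Seminorm_schwartzSchrodinger_one μ ħ _

theorem l2Seminorm_schwartzSchrodinger_one_pow_smul_lineDerivOp_le (ħ : ℝ) (m : ℕ) (i : ι)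
    (f : 𝓢(E, F)) :
    l2Seminorm μ ((schwartzSchrodinger ħ 1 ^ m) (ħ • ∂_{b i} f)) ≤
      l2Seminorm μ ((schwartzSchrodinger ħ 1 ^ (m + 1)) f) := by
  rw [map_smul, ← lineDerivOp_schwartzSchrodinger_one_pow, pow_succ', Module.End.mul_apply]
  exact l2Seminorm_smul_lineDerivOp_le μ b ħ i _

theorem l2Seminorm_schwartzSchrodinger_one_pow_succ_smulLeftCLM_le (ħ : ℝ) (m : ℕ)
    (W : 𝓢(E, ℝ)) (f : 𝓢(E, F)) :
    l2Seminorm μ ((schwartzSchrodinger ħ 1 ^ (m + 1)) (smulLeftCLM F W f)) ≤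
      l2Seminorm μ
          ((schwartzSchrodinger ħ 1 ^ m) (smulLeftCLM F W (schwartzSchrodinger ħ 1 f))) +
        ħ ^ 2 * l2Seminorm μ
          ((schwartzSchrodinger ħ 1 ^ m) (smulLeftCLM F (Δ W : 𝓢(E, ℝ)) f)) +
        2 * |ħ| * ∑ i, l2Seminorm μ
          ((schwartzSchrodinger ħ 1 ^ m)
            (smulLeftCLM F (∂_{b i} W : 𝓢(E, ℝ)) (ħ • ∂_{b i} f))) := by
  rw [pow_succ, Module.End.mul_apply, schwartzSchrodinger_one_smulLeftCLM b,
    map_sub (schwartzSchrodinger ħ 1 ^ m), map_sub (schwartzSchrodinger ħ 1 ^ m)]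
  refine (map_sub_le_add _ _ _).trans (add_le_add ((map_sub_le_add _ _ _).trans ?_) ?_)
  · rw [map_smul, map_smul_eq_mul, Real.norm_eq_abs, abs_sq]
  · rw [map_smul, map_smul_eq_mul, Real.norm_eq_abs, abs_mul, abs_two, map_sum]
    gcongr
    exact Finset.univ.le_sum_of_subadditive _ (map_zero _).le (map_add_le_add _) _

theorem exists_l2Seminorm_schwartzSchrodinger_one_pow_smulLeftCLM_le (R : ℝ) (m : ℕ)
    (W : 𝓢(E, ℝ)) :
    ∃ C, 0 ≤ C ∧ ∀ ħ, |ħ| ≤ R → ∀ f : 𝓢(E, F),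
      l2Seminorm μ ((schwartzSchrodinger ħ 1 ^ m) (smulLeftCLM F W f)) ≤
        C * l2Seminorm μ ((schwartzSchrodinger ħ 1 ^ m) f) := by
  induction m generalizing W with
  | zero => exact ⟨SchwartzMap.seminorm ℝ 0 0 W, apply_nonneg _ _, fun ħ _ f =>
      l2Seminorm_smulLeftCLM_le μ W.hasTemperateGrowth (norm_le_seminorm ℝ W) f⟩
  | succ m ih =>
    let b := stdOrthonormalBasis ℝ E
    obtain ⟨C₀, hC₀, bound⟩ := ih W
    obtain ⟨C₂, hC₂, bound_laplacian⟩ := ih (Δ W)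
    choose C₁ hC₁ bound_deriv using fun i => ih (∂_{b i} W)
    have hC₁_sum : 0 ≤ ∑ i, C₁ i := Finset.sum_nonneg fun i _ => hC₁ i
    refine ⟨C₀ + R ^ 2 * C₂ + 2 * |R| * ∑ i, C₁ i, by positivity, fun ħ hħ f => ?_⟩
    have hħR : |ħ| ≤ |R| := hħ.trans (le_abs_self R)
    set N := l2Seminorm μ ((schwartzSchrodinger ħ 1 ^ (m + 1)) f) with hN
    have main_term := bound ħ hħ (schwartzSchrodinger ħ 1 f)
    rw [← Module.End.mul_apply (_ ^ m) _ f, ← pow_succ, ← hN] at main_term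
    have laplacian_term := (bound_laplacian ħ hħ f).trans <| mul_le_mul_of_nonneg_left
      (l2Seminorm_schwartzSchrodinger_one_pow_le_succ μ ħ m f) hC₂
    have deriv_terms := Finset.sum_le_sum fun i (_ : i ∈ Finset.univ) =>
      (bound_deriv i ħ hħ (ħ • ∂_{b i} f)).trans <| mul_le_mul_of_nonneg_left
        (l2Seminorm_schwartzSchrodinger_one_pow_smul_lineDerivOp_le μ b ħ m i f) (hC₁ i)
    calc _ ≤ _ := l2Seminorm_schwartzSchrodinger_one_pow_succ_smulLeftCLM_le μ b ħ m W f
      _ ≤ C₀ * N + R ^ 2 * (C₂ * N) + 2 * |R| * ∑ i, C₁ i * N :=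
          add_le_add
            (add_le_add main_term
              (mul_le_mul (sq_le_sq.2 hħR) laplacian_term (apply_nonneg _ _) (sq_nonneg R)))
            (mul_le_mul (by gcongr) deriv_terms
              (Finset.sum_nonneg fun i _ => apply_nonneg _ _) (by positivity))
      _ = (C₀ + R ^ 2 * C₂ + 2 * |R| * ∑ i, C₁ i) * N := by
          rw [← Finset.sum_mul]
          ring

theorem exists_l2Seminorm_schwartzSchrodinger_one_pow_le {K : Set E} {c : ℝ} (hc : 0 < c)
    (v : 𝓢(E, ℝ)) (hv : ∀ x ∈ K, c ≤ v x) (R : ℝ) (k : ℕ) :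
    ∃ C, 0 < C ∧ ∀ ħ, |ħ| ≤ R → ∀ f : 𝓢(E, F), tsupport f ⊆ K →
      l2Seminorm μ ((schwartzSchrodinger ħ 1 ^ k) f) ≤
        C * l2Seminorm μ ((schwartzSchrodinger ħ v ^ k) f) := by
  choose C hC bound using
    fun m => exists_l2Seminorm_schwartzSchrodinger_one_pow_smulLeftCLM_le (F := F) μ R m v
  have hC' (m : ℕ) : 0 ≤ 1 + C m := add_nonneg zero_le_one (hC m)
  refine ⟨∏ m ∈ Finset.range k, (1 + (1 + C m) * c⁻¹), Finset.prod_pos fun m _ => ?_,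
    fun ħ hħ f hf => ?_⟩
  · have := hC' m
    positivity
  refine seminorm_pow_apply_le_prod_mul (l2Seminorm μ) (S := {g : 𝓢(E, F) | tsupport g ⊆ K})
    (fun g hg => (tsupport_schwartzSchrodinger_subset ħ v g).trans hg) (inv_nonneg.2 hc.le)
    (fun g hg => ?_) hC' (fun m g => ?_) k hf
  · rw [← div_eq_inv_mul, le_div_iff₀' hc]
    exact mul_l2Seminorm_le_l2Seminorm_schwartzSchrodinger μ ħ v.hasTemperateGrowth
      fun x hx => hv x (hg hx)
  · have perturbation : (schwartzSchrodinger ħ 1 - schwartzSchrodinger ħ v : Module.End ℝ _) g =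
        g - smulLeftCLM F v g := by
      rw [LinearMap.sub_apply, schwartzSchrodinger_one_apply, schwartzSchrodinger_apply,
        sub_sub_sub_cancel_right]
    rw [perturbation, map_sub, add_mul, one_mul]
    exact (map_sub_le_add _ _ _).trans (add_le_add_right (bound m ħ hħ g) _)

end L2

end Schwartz

open scoped Manifold in
theorem exists_schwartzMap_eqOn_of_contDiffOn {E F : Type*} [NormedAddCommGroup E]
    [NormedSpace ℝ E] [FiniteDimensional ℝ E] [NormedAddCommGroup F] [NormedSpace ℝ F]
    {K U : Set E} (hK : IsCompact K) (hU : IsOpen U) (hKU : K ⊆ U) {V : E → F}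
    (hV : ContDiffOn ℝ ∞ V U) :
    ∃ v : 𝓢(E, F), Set.EqOn v V K := by
  obtain ⟨L, hL, hKL, hLU⟩ := exists_compact_between hK hU hKU
  obtain ⟨χ, hχ_one, hχ_zero, -⟩ := exists_contMDiffMap_one_nhds_of_subset_interior (n := (⊤ : ℕ∞))
    𝓘(ℝ, E) hK.isClosed hKL
  have smooth : ContDiff ℝ ∞ fun x => χ x • V x := by
    refine contDiff_iff_contDiffAt.2 fun x => ?_
    by_cases hx : x ∈ U
    · exact χ.contMDiff.contDiff.contDiffAt.smul (hV.contDiffAt (hU.mem_nhds hx))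
    · refine (contDiffAt_const (c := 0)).congr_of_eventuallyEq ?_
      filter_upwards [hL.isClosed.isOpen_compl.mem_nhds fun h => hx (hLU h)] with y hy
      rw [hχ_zero y hy, zero_smul]
  have compact_support : HasCompactSupport fun x => χ x • V x :=
    .intro hL fun x hx => by rw [hχ_zero x hx, zero_smul]
  refine ⟨compact_support.toSchwartzMap smooth, fun x hx => ?_⟩
  change χ x • V x = V x
  rw [hχ_one.self_of_nhdsSet x hx, one_smul]

section EuclideanSpace

variable {n : ℕ}

theorem laplacianC_coe (f : 𝓢(EuclideanSpace ℝ (Fin n), ℂ)) :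
    laplacianC f = (Δ f : 𝓢(EuclideanSpace ℝ (Fin n), ℂ)) := by
  ext x
  rw [laplacian_eq_sum (EuclideanSpace.basisFun (Fin n) ℝ), sum_apply]
  simp only [EuclideanSpace.basisFun_apply]
  rfl

theorem helmholtzOp_eq_schrodingerOp_one (hbar : ℝ) :
    helmholtzOp (n := n) hbar = schrodingerOp hbar 1 := by
  ext f x
  simp [helmholtzOp, schrodingerOp]

theorem coe_schwartzSchrodinger_pow (hbar : ℝ) {K : Set (EuclideanSpace ℝ (Fin n))}
    {v V : EuclideanSpace ℝ (Fin n) → ℝ} (hv : v.HasTemperateGrowth) (hvV : Set.EqOn v V K)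
    (k : ℕ) {f : 𝓢(EuclideanSpace ℝ (Fin n), ℂ)} (hf : tsupport f ⊆ K) :
    (schwartzSchrodinger hbar v ^ k) f = (schrodingerOp hbar V)^[k] f := by
  induction k generalizing f with
  | zero => rfl
  | succ k ih =>
    have one_step : schwartzSchrodinger hbar v f = schrodingerOp hbar V f := by
      ext x
      rw [schwartzSchrodinger_apply, schrodingerOp, laplacianC_coe]
      by_cases hx : x ∈ tsupport f
      · simp [smulLeftCLM_apply_apply hv, hvV (hf hx)]
      · simp [smulLeftCLM_apply_apply hv, image_eq_zero_of_notMem_tsupport hx]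
    rw [pow_succ, Module.End.mul_apply, Function.iterate_succ_apply,
      ih ((tsupport_schwartzSchrodinger_subset hbar v f).trans hf), one_step]

end EuclideanSpace

theorem helmholtz_schrodinger_comparison_general {n : ℕ}
    {K U : Set (EuclideanSpace ℝ (Fin n))} (hK : IsCompact K) (hU : IsOpen U) (hKU : K ⊆ U)
    {V : EuclideanSpace ℝ (Fin n) → ℝ} (hV : ContDiffOn ℝ ∞ V U) (hVpos : ∀ x ∈ K, 0 < V x)
    (R : ℝ) (k : ℕ) :
    ∃ C : ℝ, 0 < C ∧
      ∀ f : EuclideanSpace ℝ (Fin n) → ℂ, ContDiff ℝ ∞ f → tsupport f ⊆ K →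
        ∀ hbar, |hbar| ≤ R →
          eLpNorm ((helmholtzOp hbar)^[k] f) 2 volume ≤
            ENNReal.ofReal C * eLpNorm ((schrodingerOp hbar V)^[k] f) 2 volume := by
  obtain ⟨c, hc, hcV⟩ := hK.exists_forall_le' (hV.continuousOn.mono hKU) hVpos
  obtain ⟨v, hvV⟩ := exists_schwartzMap_eqOn_of_contDiffOn hK hU hKU hV
  obtain ⟨C, hC, bound⟩ := exists_l2Seminorm_schwartzSchrodinger_one_pow_le (F := ℂ) volume hc v
    (fun x hx => (hcV x hx).trans_eq (hvV hx).symm) R k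
  refine ⟨C, hC, fun f hf hfK hbar hR => ?_⟩
  have hf_compact : HasCompactSupport f := hK.of_isClosed_subset (isClosed_tsupport f) hfK
  obtain ⟨φ, rfl⟩ : ∃ φ : 𝓢(EuclideanSpace ℝ (Fin n), ℂ), φ = f :=
    ⟨hf_compact.toSchwartzMap hf, rfl⟩
  rw [helmholtzOp_eq_schrodingerOp_one,
    ← coe_schwartzSchrodinger_pow hbar (v := 1) (.const 1) (Set.eqOn_refl _ _) k hfK,
    ← coe_schwartzSchrodinger_pow hbar v.hasTemperateGrowth hvV k hfK,
    ← ofReal_l2Seminorm, ← ofReal_l2Seminorm, ← ENNReal.ofReal_mul hC.le]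
  exact ENNReal.ofReal_le_ofReal (bound hbar hR φ hfK)

/-- comparison of iterated semiclassical operators
`‖(1 − ħ²Δ)^k f‖_{L²} ≤ C_k ‖(V − ħ²Δ)^k f‖_{L²}` for smooth `f` compactly supported
in a bounded open set `Ω` on a neighborhood of whose closure `V ≥ 1` is smooth. -/
theorem helmholtz_schrodinger_comparison
    (n : ℕ) (hn : 1 ≤ n)
    (Ω : Set (EuclideanSpace ℝ (Fin n)))
    (hΩopen : IsOpen Ω) (hΩbd : Bornology.IsBounded Ω)
    (V : EuclideanSpace ℝ (Fin n) → ℝ)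
    (hV1 : ∀ x, 1 ≤ V x)
    (U : Set (EuclideanSpace ℝ (Fin n)))
    (hUopen : IsOpen U) (hclosure : closure Ω ⊆ U)
    (hVsmooth : ContDiffOn ℝ (⊤ : ℕ∞) V U) :
    ∀ k : ℕ, ∃ C : ℝ, 0 < C ∧
      ∀ f : EuclideanSpace ℝ (Fin n) → ℂ,
        ContDiff ℝ (⊤ : ℕ∞) f → HasCompactSupport f → tsupport f ⊆ Ω →
        ∀ hbar ∈ Set.Ioc (0 : ℝ) 1,
          eLpNorm ((helmholtzOp hbar)^[k] f) 2
              (volume : Measure (EuclideanSpace ℝ (Fin n))) ≤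
            ENNReal.ofReal C *
              eLpNorm ((schrodingerOp hbar V)^[k] f) 2
                (volume : Measure (EuclideanSpace ℝ (Fin n))) := by
  intro k
  obtain ⟨C, hC, bound⟩ := helmholtz_schrodinger_comparison_general hΩbd.isCompact_closure hUopen
    hclosure hVsmooth (fun x _ => zero_lt_one.trans_le (hV1 x)) 1 k
  exact ⟨C, hC, fun f hf _ hfΩ hbar hbar_mem => bound f hf (hfΩ.trans subset_closure) hbar
    (abs_le.2 ⟨by linarith [hbar_mem.1], hbar_mem.2⟩)⟩
end

section
/- Let n ≥ 1, let Ω ⊂ ℝⁿ be a bounded open set, and let V : ℝⁿ → ℝ satisfy V(x) ≥ 1 for all x and be C^∞ on an open neighborhood of the closure of Ω. Then for every k ∈ ℕ there exists a constant C_k > 0 (depending on V, Ω, k, n) such that for every C^∞ function f : ℝⁿ → ℂ with compact support contained in Ω and every ħ ∈ (0,1]: ‖f‖_{C^{2k}} ≤ C_k · ħ^{−2k − n/2} · ‖ (V − ħ²Δ)^{k + ⌊n/4⌋ + 1} f ‖_{L²(ℝⁿ)}. -/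
open MeasureTheory
open scoped ENNReal

/-!
Only the values of `V` on the support of `f` matter, so `V` may be replaced by `1 + W` with `W` a
Schwartz function and `1 + W ≥ c > 0` everywhere. Write `A = 1 - ħ²Δ` and `P = A + W`. Since `-Δ`
is nonnegative, `c ‖f‖ ≤ ‖P f‖` in `L²`. Commuting `A` past a Schwartz multiplier costs only terms
carrying a factor `ħ` for every derivative of `f`, so multiplication by `W` is bounded for the norm
`‖A ^ m f‖` uniformly in `ħ ≤ 1`. Writing `A ^ (m + 1) f = A ^ m (P f) - A ^ m (W f)`, induction on
`m` gives `‖A ^ m f‖ ≤ C ‖P ^ m f‖`.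

On the Fourier side `A` is multiplication by `s(ξ) = 1 + (2πħ|ξ|)²`. A derivative of order at most
`2k` is bounded by `∫ (2π|ξ|) ^ |α| |𝓕 f| ≤ ħ ^ (-2k) ∫ s⁻ᵖ · s ^ (k + p) |𝓕 f|`, and by
Cauchy–Schwarz this is at most `ħ ^ (-2k) ‖s⁻ᵖ‖ ‖A ^ (k + p) f‖`. The substitution `ξ ↦ ħξ` shows
that `‖s⁻ᵖ‖` is a multiple of `ħ ^ (-n/2)`, finite as soon as `4p > n`.
-/

namespace EllipticEstimate

open Laplacian LineDeriv FourierTransform SchwartzMap Real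
open Module (finrank)

section Operators

variable {E F : Type*} [NormedAddCommGroup E] [NormedAddCommGroup F] [NormedSpace ℝ F]

section Multiplication

variable [NormedSpace ℝ E]

/-- Multiplication by a real-valued Schwartz function, as an operator on Schwartz functions. -/
noncomputable def mulCLM (W : 𝓢(E, ℝ)) : 𝓢(E, F) →L[ℝ] 𝓢(E, F) :=
  smulLeftCLM F W

theorem mulCLM_apply (W : 𝓢(E, ℝ)) (f : 𝓢(E, F)) (x : E) : mulCLM W f x = W x • f x :=
  smulLeftCLM_apply_apply W.hasTemperateGrowth f x

theorem coe_mulCLM (W : 𝓢(E, ℝ)) (f : 𝓢(E, F)) : ⇑(mulCLM W f) = fun x ↦ W x • f x :=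
  funext (mulCLM_apply W f)

theorem lineDerivOp_mulCLM (v : E) (W : 𝓢(E, ℝ)) (f : 𝓢(E, F)) :
    ∂_{v} (mulCLM W f) = mulCLM (∂_{v} W) f + mulCLM W (∂_{v} f) := by
  ext x
  simp only [add_apply, lineDerivOp_apply_eq_fderiv, mulCLM_apply, coe_mulCLM,
    fderiv_fun_smul W.differentiableAt f.differentiableAt]
  simp [add_comm]

end Multiplication

variable [InnerProductSpace ℝ E] [FiniteDimensional ℝ E]

theorem laplacian_mulCLM {ι : Type*} [Fintype ι] (b : OrthonormalBasis ι ℝ E) (W : 𝓢(E, ℝ))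
    (f : 𝓢(E, F)) :
    Δ (mulCLM W f) = mulCLM W (Δ f) + mulCLM (Δ W) f +
      (2 : ℝ) • ∑ i, mulCLM (∂_{b i} W) (∂_{b i} f) := by
  ext x
  simp only [laplacian_eq_sum b, lineDerivOp_mulCLM, lineDerivOp_add, add_apply, sum_apply,
    mulCLM_apply, Finset.sum_add_distrib, Finset.smul_sum, Finset.sum_smul, two_smul]
  abel

/-- The free semiclassical operator `1 - ħ²Δ` on Schwartz functions. -/
noncomputable def freeOp (ħ : ℝ) : 𝓢(E, F) →L[ℝ] 𝓢(E, F) :=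
  1 - ħ ^ 2 • laplacianCLM ℝ E 𝓢(E, F)

/-- The semiclassical Schrödinger operator `1 + W - ħ²Δ` on Schwartz functions. The potential is
encoded by its difference `W` from the constant `1`, so that `W` can be a Schwartz function. -/
noncomputable def perturbedOp (ħ : ℝ) (W : 𝓢(E, ℝ)) : 𝓢(E, F) →L[ℝ] 𝓢(E, F) :=
  freeOp ħ + mulCLM W

theorem freeOp_apply (ħ : ℝ) (f : 𝓢(E, F)) : freeOp ħ f = f - ħ ^ 2 • Δ f := rfl

theorem perturbedOp_apply (ħ : ℝ) (W : 𝓢(E, ℝ)) (f : 𝓢(E, F)) :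
    perturbedOp ħ W f = freeOp ħ f + mulCLM W f := rfl

theorem freeOp_mulCLM {ι : Type*} [Fintype ι] (b : OrthonormalBasis ι ℝ E) (ħ : ℝ) (W : 𝓢(E, ℝ))
    (f : 𝓢(E, F)) :
    freeOp ħ (mulCLM W f) = mulCLM W (freeOp ħ f) - ħ ^ 2 • mulCLM (Δ W) f -
      (2 * ħ) • ∑ i, mulCLM (∂_{b i} W) (ħ • ∂_{b i} f) := by
  simp only [freeOp_apply, laplacian_mulCLM b, map_sub, map_smul, ← Finset.smul_sum]
  module

theorem freeOp_pow_succ_mulCLM {ι : Type*} [Fintype ι] (b : OrthonormalBasis ι ℝ E) (ħ : ℝ)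
    (m : ℕ) (W : 𝓢(E, ℝ)) (f : 𝓢(E, F)) :
    (freeOp ħ ^ (m + 1)) (mulCLM W f) = (freeOp ħ ^ m) (mulCLM W (freeOp ħ f)) -
      ħ ^ 2 • (freeOp ħ ^ m) (mulCLM (Δ W) f) -
      (2 * ħ) • ∑ i, (freeOp ħ ^ m) (mulCLM (∂_{b i} W) (ħ • ∂_{b i} f)) := by
  rw [pow_succ, mul_apply_eq_comp, freeOp_mulCLM b, map_sub, map_sub, map_smul, map_smul, map_sum]

end Operators

section Symbol

variable {E : Type*} [NormedAddCommGroup E]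

/-- The Fourier symbol `1 + (2πħ|ξ|)²` of `freeOp ħ`; the factor `2π` comes from Mathlib's
normalization of the Fourier transform. -/
noncomputable def freeSymbol (ħ : ℝ) (ξ : E) : ℝ := 1 + (2 * π * ħ * ‖ξ‖) ^ 2

theorem one_le_freeSymbol (ħ : ℝ) (ξ : E) : 1 ≤ freeSymbol ħ ξ :=
  le_add_of_nonneg_right (sq_nonneg _)

theorem freeSymbol_pos (ħ : ℝ) (ξ : E) : 0 < freeSymbol ħ ξ :=
  one_pos.trans_le (one_le_freeSymbol ħ ξ)

theorem frequency_pow_le_freeSymbol_pow {ħ : ℝ} (hħ : ħ ∈ Set.Ioc 0 1) {j k : ℕ} (hj : j ≤ 2 * k)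
    (ξ : E) : (2 * π * ‖ξ‖) ^ j ≤ ħ ^ (-(2 * k : ℝ)) * freeSymbol ħ ξ ^ k := by
  obtain ⟨hħ_pos, hħ_le⟩ := hħ
  have rpow_eq : ħ ^ (-(2 * k : ℝ)) = (ħ ^ (2 * k))⁻¹ := by
    rw [rpow_neg hħ_pos.le]
    norm_cast
  have le_sqrt_symbol : 2 * π * ‖ξ‖ * ħ ≤ √(freeSymbol ħ ξ) := by
    refine le_sqrt_of_sq_le ?_
    rw [freeSymbol]
    linarith
  rw [rpow_eq, le_inv_mul_iff₀ (by positivity), mul_comm]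
  calc (2 * π * ‖ξ‖) ^ j * ħ ^ (2 * k) ≤ (2 * π * ‖ξ‖) ^ j * ħ ^ j :=
        mul_le_mul_of_nonneg_left (pow_le_pow_of_le_one hħ_pos.le hħ_le hj) (by positivity)
    _ = (2 * π * ‖ξ‖ * ħ) ^ j := (mul_pow _ _ _).symm
    _ ≤ √(freeSymbol ħ ξ) ^ j := by gcongr
    _ ≤ √(freeSymbol ħ ξ) ^ (2 * k) :=
        pow_le_pow_right₀ (one_le_sqrt.2 (one_le_freeSymbol ħ ξ)) hj
    _ = freeSymbol ħ ξ ^ k := by rw [pow_mul, sq_sqrt (freeSymbol_pos ħ ξ).le]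

end Symbol

section L2

variable {E H : Type*} [NormedAddCommGroup E] [InnerProductSpace ℝ E] [FiniteDimensional ℝ E]
  [MeasurableSpace E] [BorelSpace E] [NormedAddCommGroup H]

section Real

variable [NormedSpace ℝ H]

/-- The `L²` norm of Schwartz functions, as a seminorm. -/
noncomputable def l2Norm : Seminorm ℝ 𝓢(E, H) :=
  (normSeminorm ℝ (Lp H 2 (volume : Measure E))).comp (toLpCLM ℝ H 2 volume).toLinearMap

theorem l2Norm_apply (f : 𝓢(E, H)) : l2Norm f = ‖f.toLp 2‖ := rfl

theorem eLpNorm_two_eq_ofReal_l2Norm (f : 𝓢(E, H)) :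
    eLpNorm f 2 volume = ENNReal.ofReal (l2Norm f) := by
  rw [l2Norm_apply, norm_toLp, ENNReal.ofReal_toReal (f.eLpNorm_lt_top 2 volume).ne]

theorem l2Norm_eq_integral_rpow (f : 𝓢(E, H)) :
    l2Norm f = (∫ x, ‖f x‖ ^ (2 : ℝ)) ^ (1 / 2 : ℝ) := by
  rw [l2Norm_apply, norm_toLp' (by simp) (by simp), ENNReal.toReal_ofNat, one_div]

theorem l2Norm_le_mul_of_norm_le {f g : 𝓢(E, H)} {c : ℝ} (h : ∀ x, ‖f x‖ ≤ c * ‖g x‖) :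
    l2Norm f ≤ c * l2Norm g := by
  rw [l2Norm_apply, l2Norm_apply]
  refine Lp.norm_le_mul_norm_of_ae_le_mul ?_
  filter_upwards [f.coeFn_toLp 2, g.coeFn_toLp 2] with x hf hg
  simpa only [hf, hg] using h x

theorem l2Norm_mulCLM_le (W : 𝓢(E, ℝ)) (f : 𝓢(E, H)) :
    l2Norm (mulCLM W f) ≤ ‖W.toBoundedContinuousFunction‖ * l2Norm f := by
  refine l2Norm_le_mul_of_norm_le fun x ↦ ?_
  rw [mulCLM_apply, norm_smul]
  gcongr
  exact W.toBoundedContinuousFunction.norm_coe_le_norm x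

end Real

variable [InnerProductSpace ℂ H]

theorem re_inner_toLp_nonneg {f g : 𝓢(E, H)} {w : E → ℝ} (hw : ∀ x, 0 ≤ w x)
    (hg : ∀ x, g x = w x • f x) : 0 ≤ RCLike.re (inner ℂ (f.toLp 2) (g.toLp 2)) := by
  have inner_eq (x : E) : inner ℂ (f x) (g x) = ((w x * ‖f x‖ ^ 2 : ℝ) : ℂ) := by
    rw [hg, inner_smul_right_eq_smul, inner_self_eq_norm_sq_to_K]
    simp
  simp only [inner_toL2_toL2_eq, inner_eq, integral_complex_ofReal, RCLike.re_to_complex,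
    Complex.ofReal_re]
  exact integral_nonneg fun x ↦ mul_nonneg (hw x) (sq_nonneg _)

theorem norm_fourier_lineDerivOp_le (v : E) (f : 𝓢(E, H)) (ξ : E) :
    ‖𝓕 (∂_{v} f) ξ‖ ≤ 2 * π * ‖ξ‖ * ‖v‖ * ‖𝓕 f ξ‖ := by
  have norm_two_pi_I : ‖(2 * π * Complex.I : ℂ)‖ = 2 * π := by simp [pi_nonneg]
  rw [fourier_lineDerivOp_eq, smul_apply, smulLeftCLM_apply_apply (by fun_prop), norm_smul,
    norm_smul, norm_two_pi_I, mul_assoc (2 * π) ‖ξ‖, mul_assoc (2 * π)]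
  gcongr
  exact norm_inner_le_norm ξ v

theorem norm_fourier_iterate_lineDerivOp_le {v : E} (hv : ‖v‖ ≤ 1) (m : ℕ) (f : 𝓢(E, H)) (ξ : E) :
    ‖𝓕 (∂_{v}^[m] f) ξ‖ ≤ (2 * π * ‖ξ‖) ^ m * ‖𝓕 f ξ‖ := by
  induction m with
  | zero => simp
  | succ m ih =>
    rw [Function.iterate_succ_apply']
    calc ‖𝓕 (∂_{v} (∂_{v}^[m] f)) ξ‖
        ≤ 2 * π * ‖ξ‖ * ‖v‖ * ‖𝓕 (∂_{v}^[m] f) ξ‖ := norm_fourier_lineDerivOp_le v _ ξ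
      _ ≤ 2 * π * ‖ξ‖ * 1 * ((2 * π * ‖ξ‖) ^ m * ‖𝓕 f ξ‖) := by gcongr
      _ = (2 * π * ‖ξ‖) ^ (m + 1) * ‖𝓕 f ξ‖ := by ring

variable [CompleteSpace H]

theorem l2Norm_fourier (f : 𝓢(E, H)) : l2Norm (𝓕 f) = l2Norm f :=
  norm_fourier_toL2_eq f

theorem l2Norm_le_mul_of_norm_fourier_le {f g : 𝓢(E, H)} {c : ℝ}
    (h : ∀ ξ, ‖𝓕 f ξ‖ ≤ c * ‖𝓕 g ξ‖) : l2Norm f ≤ c * l2Norm g := by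
  rw [← l2Norm_fourier f, ← l2Norm_fourier g]
  exact l2Norm_le_mul_of_norm_le h

theorem fourier_laplacian_apply (f : 𝓢(E, H)) (ξ : E) :
    𝓕 (Δ f) ξ = -(2 * π * ‖ξ‖) ^ 2 • 𝓕 f ξ := by
  have norm_sq_smul :=
    smulLeftCLM_apply_apply (F := H) (g := fun ξ : E ↦ ‖ξ‖ ^ 2) (by fun_prop) (𝓕 f) ξ
  rw [laplacian_eq_fourierMultiplierCLM, fourier_smul, fourierMultiplierCLM_apply,
    fourier_fourierInv_eq, smul_apply, norm_sq_smul]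
  module

theorem fourier_freeOp_apply (ħ : ℝ) (f : 𝓢(E, H)) (ξ : E) :
    𝓕 (freeOp ħ f) ξ = freeSymbol ħ ξ • 𝓕 f ξ := by
  rw [freeOp_apply, sub_eq_add_neg, ← neg_smul, FourierTransform.fourier_add, fourier_smul,
    add_apply, smul_apply, fourier_laplacian_apply, freeSymbol]
  module

theorem norm_fourier_freeOp_pow_apply (ħ : ℝ) (m : ℕ) (f : 𝓢(E, H)) (ξ : E) :
    ‖𝓕 ((freeOp ħ ^ m) f) ξ‖ = freeSymbol ħ ξ ^ m * ‖𝓕 f ξ‖ := by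
  induction m with
  | zero => simp
  | succ m ih =>
    rw [pow_succ', mul_apply_eq_comp, fourier_freeOp_apply, norm_smul,
      norm_of_nonneg (freeSymbol_pos ħ ξ).le, ih, pow_succ', mul_assoc]

theorem l2Norm_freeOp_pow_le_succ (ħ : ℝ) (m : ℕ) (f : 𝓢(E, H)) :
    l2Norm ((freeOp ħ ^ m) f) ≤ l2Norm ((freeOp ħ ^ (m + 1)) f) := by
  rw [← one_mul (l2Norm ((freeOp ħ ^ (m + 1)) f))]
  refine l2Norm_le_mul_of_norm_fourier_le fun ξ ↦ ?_
  rw [norm_fourier_freeOp_pow_apply, norm_fourier_freeOp_pow_apply, one_mul]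
  gcongr
  exacts [one_le_freeSymbol ħ ξ, m.le_succ]

theorem l2Norm_freeOp_pow_lineDerivOp_le (ħ : ℝ) (m : ℕ) (v : E) (f : 𝓢(E, H)) :
    l2Norm ((freeOp ħ ^ m) (ħ • ∂_{v} f)) ≤ ‖v‖ * l2Norm ((freeOp ħ ^ (m + 1)) f) := by
  refine l2Norm_le_mul_of_norm_fourier_le fun ξ ↦ ?_
  have abs_le_symbol : |ħ| * (2 * π * ‖ξ‖) ≤ freeSymbol ħ ξ := by
    have symbol_eq : freeSymbol ħ ξ = 1 + (|ħ| * (2 * π * ‖ξ‖)) ^ 2 := by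
      rw [freeSymbol, mul_pow |ħ|, sq_abs]
      ring
    nlinarith [sq_nonneg (|ħ| * (2 * π * ‖ξ‖) - 1)]
  rw [norm_fourier_freeOp_pow_apply, norm_fourier_freeOp_pow_apply,
    fourier_smul, smul_apply, norm_smul, norm_eq_abs]
  have symbol_pos := freeSymbol_pos ħ ξ
  calc freeSymbol ħ ξ ^ m * (|ħ| * ‖𝓕 (∂_{v} f) ξ‖)
      ≤ freeSymbol ħ ξ ^ m * (|ħ| * (2 * π * ‖ξ‖ * ‖v‖ * ‖𝓕 f ξ‖)) := by
        gcongr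
        exact norm_fourier_lineDerivOp_le v f ξ
    _ = freeSymbol ħ ξ ^ m * (|ħ| * (2 * π * ‖ξ‖)) * (‖v‖ * ‖𝓕 f ξ‖) := by ring
    _ ≤ freeSymbol ħ ξ ^ m * freeSymbol ħ ξ * (‖v‖ * ‖𝓕 f ξ‖) := by gcongr
    _ = ‖v‖ * (freeSymbol ħ ξ ^ (m + 1) * ‖𝓕 f ξ‖) := by ring

theorem re_inner_toLp_neg_laplacian_nonneg (f : 𝓢(E, H)) :
    0 ≤ RCLike.re (inner ℂ (f.toLp 2) ((-Δ f).toLp 2)) := by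
  have fourier_neg_laplacian (ξ : E) : 𝓕 (-Δ f) ξ = (2 * π * ‖ξ‖) ^ 2 • 𝓕 f ξ := by
    rw [FourierTransform.fourier_neg, neg_apply, fourier_laplacian_apply]
    module
  rw [← inner_fourier_toL2_eq]
  exact re_inner_toLp_nonneg (fun ξ ↦ sq_nonneg _) fourier_neg_laplacian

theorem mul_l2Norm_le_l2Norm_perturbedOp {c : ℝ} {W : 𝓢(E, ℝ)} (hW : ∀ x, c ≤ 1 + W x) (ħ : ℝ)
    (f : 𝓢(E, H)) : c * l2Norm f ≤ l2Norm (perturbedOp ħ W f) := by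
  have decomposition : perturbedOp ħ W f =
      c • f + ((1 - c) • f + mulCLM W f) + ħ ^ 2 • (-Δ f) := by
    rw [perturbedOp_apply, freeOp_apply]
    module
  have potential_nonneg :
      0 ≤ RCLike.re (inner ℂ (f.toLp 2) (((1 - c) • f + mulCLM W f).toLp 2)) := by
    refine re_inner_toLp_nonneg (w := fun x ↦ 1 - c + W x) (fun x ↦ by linarith [hW x]) fun x ↦ ?_
    rw [add_apply, smul_apply, mulCLM_apply, add_smul]
  have quadratic_form_ge : c * l2Norm f ^ 2 ≤
      RCLike.re (inner ℂ (f.toLp 2) ((perturbedOp ħ W f).toLp 2)) := by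
    have toLp_eq : (perturbedOp ħ W f).toLp 2 volume = c • f.toLp 2 volume +
        ((1 - c) • f + mulCLM W f).toLp 2 volume + ħ ^ 2 • (-Δ f).toLp 2 volume := by
      simp only [decomposition, ← toLpCLM_apply (𝕜 := ℝ), map_add, map_smul]
    rw [toLp_eq, inner_add_right, inner_add_right, inner_smul_right_eq_smul,
      inner_smul_right_eq_smul, map_add, map_add, RCLike.smul_re, RCLike.smul_re,
      inner_self_eq_norm_sq, ← l2Norm_apply]
    nlinarith [sq_nonneg ħ, re_inner_toLp_neg_laplacian_nonneg f]
  have cauchy_schwarz : RCLike.re (inner ℂ (f.toLp 2) ((perturbedOp ħ W f).toLp 2)) ≤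
      l2Norm f * l2Norm (perturbedOp ħ W f) := re_inner_le_norm _ _
  rcases (apply_nonneg l2Norm f).eq_or_lt with zero | pos
  · rw [← zero, mul_zero]
    exact apply_nonneg _ _
  · exact le_of_mul_le_mul_left (by linarith) pos

theorem l2Norm_freeOp_pow_succ_mulCLM_le {ι : Type*} [Fintype ι] (b : OrthonormalBasis ι ℝ E)
    {ħ : ℝ} (hħ : |ħ| ≤ 1) {m : ℕ} {W : 𝓢(E, ℝ)} {C₀ C₁ : ℝ} {C₂ : ι → ℝ} (hC₁ : 0 ≤ C₁)
    (hC₂ : ∀ i, 0 ≤ C₂ i)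
    (hW : ∀ g : 𝓢(E, H), l2Norm ((freeOp ħ ^ m) (mulCLM W g)) ≤ C₀ * l2Norm ((freeOp ħ ^ m) g))
    (hΔW : ∀ g : 𝓢(E, H),
      l2Norm ((freeOp ħ ^ m) (mulCLM (Δ W) g)) ≤ C₁ * l2Norm ((freeOp ħ ^ m) g))
    (hDW : ∀ i, ∀ g : 𝓢(E, H),
      l2Norm ((freeOp ħ ^ m) (mulCLM (∂_{b i} W) g)) ≤ C₂ i * l2Norm ((freeOp ħ ^ m) g))
    (f : 𝓢(E, H)) :
    l2Norm ((freeOp ħ ^ (m + 1)) (mulCLM W f)) ≤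
      (C₀ + C₁ + 2 * ∑ i, C₂ i) * l2Norm ((freeOp ħ ^ (m + 1)) f) := by
  set N := l2Norm ((freeOp ħ ^ (m + 1)) f)
  have leading_term : l2Norm ((freeOp ħ ^ m) (mulCLM W (freeOp ħ f))) ≤ C₀ * N := by
    simpa only [← mul_apply_eq_comp, ← pow_succ] using hW (freeOp ħ f)
  have laplacian_term : l2Norm ((freeOp ħ ^ m) (mulCLM (Δ W) f)) ≤ C₁ * N :=
    (hΔW f).trans (by gcongr; exact l2Norm_freeOp_pow_le_succ ħ m f)
  have gradient_term (i : ι) :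
      l2Norm ((freeOp ħ ^ m) (mulCLM (∂_{b i} W) (ħ • ∂_{b i} f))) ≤ C₂ i * N := by
    refine (hDW i _).trans (mul_le_mul_of_nonneg_left ?_ (hC₂ i))
    simpa only [b.norm_eq_one, one_mul] using l2Norm_freeOp_pow_lineDerivOp_le ħ m (b i) f
  have gradient_sum :
      l2Norm (∑ i, (freeOp ħ ^ m) (mulCLM (∂_{b i} W) (ħ • ∂_{b i} f))) ≤ (∑ i, C₂ i) * N := by
    rw [Finset.sum_mul]
    exact (Finset.le_sum_of_subadditive _ (map_zero _).le (map_add_le_add _) _ _).trans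
      (Finset.sum_le_sum fun i _ ↦ gradient_term i)
  have abs_sq_le : |ħ ^ 2| ≤ 1 := by rw [abs_pow]; exact pow_le_one₀ (abs_nonneg ħ) hħ
  have abs_two_mul_le : |2 * ħ| ≤ 2 := by rw [abs_mul, abs_two]; linarith
  calc l2Norm ((freeOp ħ ^ (m + 1)) (mulCLM W f))
      ≤ l2Norm ((freeOp ħ ^ m) (mulCLM W (freeOp ħ f))) +
          |ħ ^ 2| * l2Norm ((freeOp ħ ^ m) (mulCLM (Δ W) f)) +
          |2 * ħ| * l2Norm (∑ i, (freeOp ħ ^ m) (mulCLM (∂_{b i} W) (ħ • ∂_{b i} f))) := by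
        rw [freeOp_pow_succ_mulCLM b, ← norm_eq_abs, ← norm_eq_abs, ← map_smul_eq_mul,
          ← map_smul_eq_mul]
        exact (map_sub_le_add _ _ _).trans (add_le_add_left (map_sub_le_add _ _ _) _)
    _ ≤ C₀ * N + 1 * (C₁ * N) + 2 * ((∑ i, C₂ i) * N) := by gcongr
    _ = (C₀ + C₁ + 2 * ∑ i, C₂ i) * N := by ring

theorem exists_l2Norm_freeOp_pow_mulCLM_le (m : ℕ) (W : 𝓢(E, ℝ)) :
    ∃ C : ℝ, 0 ≤ C ∧ ∀ ħ : ℝ, |ħ| ≤ 1 → ∀ f : 𝓢(E, H),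
      l2Norm ((freeOp ħ ^ m) (mulCLM W f)) ≤ C * l2Norm ((freeOp ħ ^ m) f) := by
  induction m generalizing W with
  | zero => exact ⟨_, norm_nonneg _, fun ħ _ f ↦ by simpa using l2Norm_mulCLM_le W f⟩
  | succ m ih =>
    let b := stdOrthonormalBasis ℝ E
    obtain ⟨C₀, hC₀, hW⟩ := ih W
    obtain ⟨C₁, hC₁, hΔW⟩ := ih (Δ W)
    choose C₂ hC₂ hDW using fun i ↦ ih (∂_{b i} W)
    have sum_nonneg : 0 ≤ ∑ i, C₂ i := Finset.sum_nonneg fun i _ ↦ hC₂ i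
    exact ⟨C₀ + C₁ + 2 * ∑ i, C₂ i, by positivity, fun ħ hħ ↦
      l2Norm_freeOp_pow_succ_mulCLM_le b hħ hC₁ hC₂ (hW ħ hħ) (hΔW ħ hħ) fun i ↦ hDW i ħ hħ⟩

theorem exists_l2Norm_freeOp_pow_le_perturbedOp_pow {c : ℝ} (hc : 0 < c) {W : 𝓢(E, ℝ)}
    (hW : ∀ x, c ≤ 1 + W x) (m : ℕ) :
    ∃ C : ℝ, 0 ≤ C ∧ ∀ ħ : ℝ, |ħ| ≤ 1 → ∀ f : 𝓢(E, H),
      l2Norm ((freeOp ħ ^ m) f) ≤ C * l2Norm ((perturbedOp ħ W ^ m) f) := by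
  induction m with
  | zero => exact ⟨1, zero_le_one, fun ħ _ f ↦ by simp⟩
  | succ m ih =>
    obtain ⟨C, hC, comparison⟩ := ih
    obtain ⟨D, hD, multiplier⟩ := exists_l2Norm_freeOp_pow_mulCLM_le (H := H) m W
    refine ⟨C + D * (C * c⁻¹), by positivity, fun ħ hħ f ↦ ?_⟩
    have split : (freeOp ħ ^ (m + 1)) f =
        (freeOp ħ ^ m) (perturbedOp ħ W f) - (freeOp ħ ^ m) (mulCLM W f) := by
      rw [pow_succ, mul_apply_eq_comp, perturbedOp_apply, map_add, add_sub_cancel_right]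
    have coercive : l2Norm ((perturbedOp ħ W ^ m) f) ≤
        c⁻¹ * l2Norm ((perturbedOp ħ W ^ (m + 1)) f) := by
      rw [le_inv_mul_iff₀ hc, pow_succ', mul_apply_eq_comp]
      exact mul_l2Norm_le_l2Norm_perturbedOp hW ħ _
    calc l2Norm ((freeOp ħ ^ (m + 1)) f)
        ≤ l2Norm ((freeOp ħ ^ m) (perturbedOp ħ W f)) + l2Norm ((freeOp ħ ^ m) (mulCLM W f)) := by
          rw [split]
          exact map_sub_le_add _ _ _
      _ ≤ C * l2Norm ((perturbedOp ħ W ^ m) (perturbedOp ħ W f)) +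
            D * (C * (c⁻¹ * l2Norm ((perturbedOp ħ W ^ (m + 1)) f))) := by
          gcongr
          · exact comparison ħ hħ _
          · refine (multiplier ħ hħ f).trans ?_
            gcongr
            exact (comparison ħ hħ f).trans (by gcongr)
      _ = (C + D * (C * c⁻¹)) * l2Norm ((perturbedOp ħ W ^ (m + 1)) f) := by
          rw [pow_succ, mul_apply_eq_comp]
          ring

theorem norm_apply_le_integral_norm_fourier (f : 𝓢(E, H)) (x : E) : ‖f x‖ ≤ ∫ ξ, ‖𝓕 f ξ‖ := by
  have inversion : f x = 𝓕 (𝓕 f) (-x) := by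
    have apply_eq := DFunLike.congr_fun (fourierInv_apply_eq (𝓕 f)) x
    rwa [fourierInv_fourier_eq] at apply_eq
  rw [inversion, ← norm_toLp_one]
  exact norm_fourier_apply_le_toLp_one (𝓕 f) (-x)

theorem integrable_inv_freeSymbol_pow_rpow_two {ħ : ℝ} (hħ : ħ ≠ 0) {p : ℕ}
    (hp : finrank ℝ E < 4 * p) :
    Integrable fun ξ : E ↦ (freeSymbol ħ ξ ^ p)⁻¹ ^ (2 : ℝ) := by
  have finrank_lt : (finrank ℝ E : ℝ) < 4 * p := mod_cast hp
  have scale_ne_zero : 2 * π * ħ ≠ 0 := by positivity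
  have exponent : -(4 * p : ℝ) / 2 = -((p * 2 : ℕ) : ℝ) := by push_cast; ring
  have weight_eq (ξ : E) : (freeSymbol ħ ξ ^ p)⁻¹ ^ (2 : ℝ) =
      (1 + ‖(2 * π * ħ) • ξ‖ ^ 2) ^ (-(4 * p : ℝ) / 2) := by
    have symbol_eq : 1 + ‖(2 * π * ħ) • ξ‖ ^ 2 = freeSymbol ħ ξ := by
      rw [freeSymbol, norm_smul, mul_pow, norm_eq_abs, sq_abs, ← mul_pow]
    rw [symbol_eq, exponent, rpow_neg (freeSymbol_pos ħ ξ).le, rpow_natCast, rpow_two, pow_mul,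
      inv_pow]
  simp only [weight_eq]
  exact (integrable_rpow_neg_one_add_norm_sq finrank_lt).comp_smul scale_ne_zero

theorem integral_inv_freeSymbol_pow_rpow_two {ħ : ℝ} (hħ : 0 ≤ ħ) (p : ℕ) :
    ∫ ξ : E, (freeSymbol ħ ξ ^ p)⁻¹ ^ (2 : ℝ) =
      (ħ ^ finrank ℝ E)⁻¹ * ∫ ξ : E, (freeSymbol 1 ξ ^ p)⁻¹ ^ (2 : ℝ) := by
  have symbol_eq (ξ : E) : freeSymbol ħ ξ = freeSymbol 1 (ħ • ξ) := by
    rw [freeSymbol, freeSymbol, norm_smul, norm_of_nonneg hħ]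
    ring
  simp only [symbol_eq]
  rw [Measure.integral_comp_smul volume fun ξ : E ↦ (freeSymbol 1 ξ ^ p)⁻¹ ^ (2 : ℝ),
    abs_of_nonneg (by positivity), smul_eq_mul]

theorem memLp_inv_freeSymbol_pow {ħ : ℝ} (hħ : ħ ≠ 0) {p : ℕ} (hp : finrank ℝ E < 4 * p) :
    MemLp (fun ξ : E ↦ (freeSymbol ħ ξ ^ p)⁻¹) 2 := by
  have continuous_inv : Continuous fun ξ : E ↦ (freeSymbol ħ ξ ^ p)⁻¹ :=
    Continuous.inv₀ (by unfold freeSymbol; fun_prop) fun ξ ↦ (pow_pos (freeSymbol_pos ħ ξ) p).ne'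
  rw [memLp_two_iff_integrable_sq continuous_inv.aestronglyMeasurable]
  simpa only [rpow_two] using integrable_inv_freeSymbol_pow_rpow_two hħ hp

theorem norm_apply_le_mul_l2Norm_freeOp_pow {ħ : ℝ} (hħ : ħ ≠ 0) {k p : ℕ}
    (hp : finrank ℝ E < 4 * p) {a : ℝ} {f g : 𝓢(E, H)}
    (h : ∀ ξ, ‖𝓕 g ξ‖ ≤ a * (freeSymbol ħ ξ ^ k * ‖𝓕 f ξ‖)) (ha : 0 ≤ a) (x : E) :
    ‖g x‖ ≤ a * ((∫ ξ : E, (freeSymbol ħ ξ ^ p)⁻¹ ^ (2 : ℝ)) ^ (1 / 2 : ℝ) *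
      l2Norm ((freeOp ħ ^ (k + p)) f)) := by
  let F := 𝓕 ((freeOp ħ ^ (k + p)) f)
  have weight_memLp := memLp_inv_freeSymbol_pow hħ hp
  have F_memLp : MemLp (fun ξ ↦ ‖F ξ‖) 2 := (F.memLp 2 volume).norm
  have pointwise (ξ : E) : ‖𝓕 g ξ‖ ≤ a * ((freeSymbol ħ ξ ^ p)⁻¹ * ‖F ξ‖) := by
    have symbol_pow_ne_zero := (pow_pos (freeSymbol_pos ħ ξ) p).ne'
    convert h ξ using 2
    rw [norm_fourier_freeOp_pow_apply, pow_add]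
    field_simp
  calc ‖g x‖ ≤ ∫ ξ, ‖𝓕 g ξ‖ := norm_apply_le_integral_norm_fourier g x
    _ ≤ ∫ ξ, a * ((freeSymbol ħ ξ ^ p)⁻¹ * ‖F ξ‖) :=
        integral_mono (𝓕 g).integrable.norm
          ((weight_memLp.integrable_mul F_memLp).const_mul a) pointwise
    _ = a * ∫ ξ, (freeSymbol ħ ξ ^ p)⁻¹ * ‖F ξ‖ := integral_const_mul _ _
    _ ≤ a * ((∫ ξ : E, (freeSymbol ħ ξ ^ p)⁻¹ ^ (2 : ℝ)) ^ (1 / 2 : ℝ) *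
          (∫ ξ, ‖F ξ‖ ^ (2 : ℝ)) ^ (1 / 2 : ℝ)) := by
        gcongr
        exact integral_mul_le_Lp_mul_Lq_of_nonneg .two_two
          (.of_forall fun ξ ↦ (inv_pos.2 (pow_pos (freeSymbol_pos ħ ξ) p)).le)
          (.of_forall fun ξ ↦ norm_nonneg _) (by simpa using weight_memLp) (by simpa using F_memLp)
    _ = a * ((∫ ξ : E, (freeSymbol ħ ξ ^ p)⁻¹ ^ (2 : ℝ)) ^ (1 / 2 : ℝ) *
          l2Norm ((freeOp ħ ^ (k + p)) f)) := by
        rw [← l2Norm_eq_integral_rpow, l2Norm_fourier]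

theorem exists_norm_apply_le_l2Norm_freeOp_pow {p : ℕ} (hp : finrank ℝ E < 4 * p) (k : ℕ) :
    ∃ C : ℝ, 0 ≤ C ∧ ∀ ħ ∈ Set.Ioc (0 : ℝ) 1, ∀ j ≤ 2 * k, ∀ f g : 𝓢(E, H),
      (∀ ξ, ‖𝓕 g ξ‖ ≤ (2 * π * ‖ξ‖) ^ j * ‖𝓕 f ξ‖) → ∀ x,
      ‖g x‖ ≤ C * ħ ^ (-(2 * k : ℝ) - finrank ℝ E / 2) * l2Norm ((freeOp ħ ^ (k + p)) f) := by
  set I := ∫ ξ : E, (freeSymbol 1 ξ ^ p)⁻¹ ^ (2 : ℝ)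
  have I_nonneg : 0 ≤ I := integral_nonneg fun ξ ↦ by positivity [freeSymbol_pos 1 ξ]
  refine ⟨I ^ (1 / 2 : ℝ), by positivity, fun ħ hħ j hj f g hg x ↦ ?_⟩
  have hħ_pos : 0 < ħ := hħ.1
  have scaling : (ħ ^ finrank ℝ E)⁻¹ ^ (1 / 2 : ℝ) = ħ ^ (-(finrank ℝ E / 2 : ℝ)) := by
    rw [← rpow_natCast, ← rpow_neg hħ_pos.le, ← rpow_mul hħ_pos.le]
    ring_nf
  have fourier_le (ξ : E) :
      ‖𝓕 g ξ‖ ≤ ħ ^ (-(2 * k : ℝ)) * (freeSymbol ħ ξ ^ k * ‖𝓕 f ξ‖) := by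
    rw [← mul_assoc]
    exact (hg ξ).trans (by gcongr; exact frequency_pow_le_freeSymbol_pow hħ hj ξ)
  convert norm_apply_le_mul_l2Norm_freeOp_pow hħ_pos.ne' hp fourier_le (by positivity) x using 1
  rw [integral_inv_freeSymbol_pow_rpow_two hħ_pos.le, mul_rpow (by positivity) I_nonneg, scaling,
    sub_eq_add_neg, rpow_add hħ_pos]
  ring

end L2

section Localization

variable {E F : Type*} [NormedAddCommGroup E] [NormedAddCommGroup F] [NormedSpace ℝ F]

section Cutoff

variable [NormedSpace ℝ E]

theorem contDiff_smul_of_tsupport_subset {χ : E → ℝ} {u : E → F} {U : Set E} {r : WithTop ℕ∞}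
    (hχ : ContDiff ℝ r χ) (hU : IsOpen U) (hu : ContDiffOn ℝ r u U) (hχU : tsupport χ ⊆ U) :
    ContDiff ℝ r fun x ↦ χ x • u x := by
  rw [contDiff_iff_contDiffAt]
  intro x
  by_cases hx : x ∈ tsupport χ
  · exact hχ.contDiffAt.smul (hu.contDiffAt (hU.mem_nhds (hχU hx)))
  · refine contDiffAt_const (c := 0) |>.congr_of_eventuallyEq ?_
    filter_upwards [notMem_tsupport_iff_eventuallyEq.1 hx] with y hy
    rw [hy, Pi.zero_apply, zero_smul]

variable [FiniteDimensional ℝ E]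

theorem exists_contDiff_cutoff {K U : Set E} (hK : IsCompact K) (hU : IsOpen U) (hKU : K ⊆ U) :
    ∃ χ : E → ℝ, ContDiff ℝ (⊤ : ℕ∞) χ ∧ HasCompactSupport χ ∧ tsupport χ ⊆ U ∧
      Set.EqOn χ 1 K ∧ ∀ x, χ x ∈ Set.Icc 0 1 := by
  obtain ⟨L, hL, hKL, hLU⟩ := exists_compact_between hK hU hKU
  obtain ⟨χ, hχ_one, hχ_zero, hχ_mem⟩ := exists_contMDiffMap_one_nhds_of_subset_interior
    (n := (⊤ : ℕ∞)) (modelWithCornersSelf ℝ E) hK.isClosed hKL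
  have tsupport_subset : tsupport χ ⊆ L :=
    closure_minimal (fun x hx ↦ by_contra fun hxL ↦ hx (hχ_zero x hxL)) hL.isClosed
  exact ⟨χ, χ.contMDiff.contDiff, hL.of_isClosed_subset (isClosed_tsupport _) tsupport_subset,
    tsupport_subset.trans hLU, hχ_one.self_of_nhdsSet, hχ_mem⟩

theorem exists_schwartzMap_one_add_eq {K U : Set E} (hK : IsCompact K) (hU : IsOpen U)
    (hKU : K ⊆ U) {V : E → ℝ} (hV : ContDiffOn ℝ (⊤ : ℕ∞) V U) (hV_pos : ∀ x ∈ K, 0 < V x) :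
    ∃ W : 𝓢(E, ℝ), ∃ c > 0, (∀ x ∈ K, V x = 1 + W x) ∧ ∀ x, c ≤ 1 + W x := by
  have isOpen_pos : IsOpen (U ∩ V ⁻¹' Set.Ioi 0) :=
    hV.continuousOn.isOpen_inter_preimage hU isOpen_Ioi
  obtain ⟨χ, χ_smooth, χ_compact, χ_supp, χ_one, χ_mem⟩ :=
    exists_contDiff_cutoff hK isOpen_pos fun x hx ↦ ⟨hKU hx, hV_pos x hx⟩
  have χ_supp_U : tsupport χ ⊆ U := χ_supp.trans Set.inter_subset_left
  obtain ⟨c, hc, hcV⟩ : ∃ c > 0, ∀ x ∈ tsupport χ, c ≤ V x :=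
    χ_compact.isCompact.exists_forall_le' (hV.continuousOn.mono χ_supp_U) fun x hx ↦ (χ_supp hx).2
  have smooth : ContDiff ℝ (⊤ : ℕ∞) fun x ↦ χ x • (V x - 1) :=
    contDiff_smul_of_tsupport_subset χ_smooth hU (hV.sub contDiffOn_const) χ_supp_U
  let W : 𝓢(E, ℝ) := HasCompactSupport.toSchwartzMap χ_compact.smul_right smooth
  have W_apply (x : E) : W x = χ x * (V x - 1) := rfl
  refine ⟨W, min 1 c, lt_min one_pos hc, fun x hx ↦ ?_, fun x ↦ ?_⟩
  · rw [W_apply, χ_one hx, Pi.one_apply, one_mul, add_sub_cancel]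
  · rw [W_apply]
    obtain ⟨χ_nonneg, χ_le⟩ := χ_mem x
    by_cases hx : x ∈ tsupport χ
    · have min_le : min 1 c ≤ V x := (min_le_right 1 c).trans (hcV x hx)
      nlinarith [min_le_left 1 c]
    · rw [image_eq_zero_of_notMem_tsupport hx, zero_mul, add_zero]
      exact min_le_left 1 c

end Cutoff

variable [InnerProductSpace ℝ E] [FiniteDimensional ℝ E]

theorem laplacian_apply_eq_zero_of_notMem_tsupport {f : 𝓢(E, F)} {x : E} (hx : x ∉ tsupport f) :
    Δ f x = 0 := by
  rw [SchwartzMap.laplacian_apply,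
    (InnerProductSpace.laplacian_congr_nhds (notMem_tsupport_iff_eventuallyEq.1 hx)).eq_of_nhds]
  exact congr_fun (InnerProductSpace.laplacian_const (c := (0 : F))) x

theorem perturbedOp_apply_apply (ħ : ℝ) (W : 𝓢(E, ℝ)) (f : 𝓢(E, F)) (x : E) :
    perturbedOp ħ W f x = (1 + W x) • f x - ħ ^ 2 • Δ f x := by
  rw [perturbedOp_apply, freeOp_apply, add_apply, sub_apply, smul_apply, mulCLM_apply]
  module

theorem tsupport_perturbedOp_subset (ħ : ℝ) (W : 𝓢(E, ℝ)) (f : 𝓢(E, F)) :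
    tsupport (perturbedOp ħ W f) ⊆ tsupport f := by
  refine closure_minimal (fun x hx ↦ by_contra fun hxf ↦ hx ?_) (isClosed_tsupport _)
  rw [perturbedOp_apply_apply, image_eq_zero_of_notMem_tsupport hxf,
    laplacian_apply_eq_zero_of_notMem_tsupport hxf, smul_zero, smul_zero, sub_zero]

end Localization

section EuclideanSpace

variable {n : ℕ}

theorem laplacianC_eq_laplacian (f : 𝓢(EuclideanSpace ℝ (Fin n), ℂ)) : laplacianC f = Δ f := by
  ext x
  rw [laplacian_eq_sum (EuclideanSpace.basisFun (Fin n) ℝ), sum_apply]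
  simp only [EuclideanSpace.basisFun_apply]
  rfl

section SchrodingerOp

variable {V : EuclideanSpace ℝ (Fin n) → ℝ} {W : 𝓢(EuclideanSpace ℝ (Fin n), ℝ)}
  {f : 𝓢(EuclideanSpace ℝ (Fin n), ℂ)}

theorem schrodingerOp_eq_perturbedOp (hV : ∀ x ∈ tsupport f, V x = 1 + W x) (ħ : ℝ) :
    schrodingerOp ħ V f = perturbedOp ħ W f := by
  ext x
  rw [perturbedOp_apply_apply, ← laplacianC_eq_laplacian, schrodingerOp]
  by_cases hx : x ∈ tsupport f
  · rw [hV x hx]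
  · rw [image_eq_zero_of_notMem_tsupport hx, smul_zero, smul_zero]

theorem iterate_schrodingerOp_eq_perturbedOp_pow (hV : ∀ x ∈ tsupport f, V x = 1 + W x) (ħ : ℝ)
    (m : ℕ) : (schrodingerOp ħ V)^[m] f = (perturbedOp ħ W ^ m) f := by
  induction m generalizing f with
  | zero => rfl
  | succ m ih =>
    rw [Function.iterate_succ_apply, schrodingerOp_eq_perturbedOp hV, pow_succ,
      mul_apply_eq_comp]
    exact ih fun x hx ↦ hV x (tsupport_perturbedOp_subset ħ W f hx)

end SchrodingerOp

theorem iterate_pderivE_eq_iterate_lineDerivOp (i : Fin n) (m : ℕ)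
    (f : 𝓢(EuclideanSpace ℝ (Fin n), ℂ)) :
    (pderivE i)^[m] f = ∂_{EuclideanSpace.single i (1 : ℝ)}^[m] f := by
  have semiconj : Function.Semiconj (fun g : 𝓢(EuclideanSpace ℝ (Fin n), ℂ) ↦ ⇑g)
      ∂_{EuclideanSpace.single i (1 : ℝ)} (pderivE i) := fun _ ↦ rfl
  exact (semiconj.iterate_right m f).symm

theorem exists_schwartzMap_eq_foldr_pderivE (α : Fin n → ℕ) (l : List (Fin n))
    (f : 𝓢(EuclideanSpace ℝ (Fin n), ℂ)) :
    ∃ g : 𝓢(EuclideanSpace ℝ (Fin n), ℂ), ⇑g = l.foldr (fun i g ↦ (pderivE i)^[α i] g) f ∧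
      ∀ ξ, ‖𝓕 g ξ‖ ≤ (2 * π * ‖ξ‖) ^ (l.map α).sum * ‖𝓕 f ξ‖ := by
  induction l with
  | nil => exact ⟨f, rfl, by simp⟩
  | cons i l ih =>
    obtain ⟨g, g_eq, fourier_le⟩ := ih
    refine ⟨∂_{EuclideanSpace.single i (1 : ℝ)}^[α i] g, ?_, fun ξ ↦ ?_⟩
    · rw [List.foldr_cons, ← g_eq, iterate_pderivE_eq_iterate_lineDerivOp]
    · rw [List.map_cons, List.sum_cons, pow_add, mul_assoc]
      refine (norm_fourier_iterate_lineDerivOp_le (by simp) (α i) g ξ).trans ?_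
      gcongr
      exact fourier_le ξ

theorem exists_schwartzMap_eq_mderivE (α : Fin n → ℕ) (f : 𝓢(EuclideanSpace ℝ (Fin n), ℂ)) :
    ∃ g : 𝓢(EuclideanSpace ℝ (Fin n), ℂ), ⇑g = mderivE α f ∧
      ∀ ξ, ‖𝓕 g ξ‖ ≤ (2 * π * ‖ξ‖) ^ (∑ i, α i) * ‖𝓕 f ξ‖ := by
  rw [← List.sum_ofFn, List.ofFn_eq_map]
  exact exists_schwartzMap_eq_foldr_pderivE α (List.finRange n) f

theorem CkNorm_le {k : ℕ} {f : EuclideanSpace ℝ (Fin n) → ℂ} {B : ℝ}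
    (h : ∀ α : Fin n → ℕ, ∑ i, α i ≤ k → ∀ x, ‖mderivE α f x‖ ≤ B) :
    CkNorm k f ≤ (∑ j ∈ Finset.range (k + 1), (multiIndices n j).card : ℕ) * B := by
  refine ciSup_le fun x ↦ ?_
  rw [Nat.cast_sum, Finset.sum_mul]
  refine Finset.sum_le_sum fun j hj ↦ ?_
  rw [← nsmul_eq_mul]
  refine Finset.sum_le_card_nsmul _ _ _ fun α hα ↦ h α ?_ x
  rw [(Finset.mem_filter.1 hα).2]
  exact Finset.mem_range_succ_iff.1 hj

theorem exists_CkNorm_le_l2Norm_freeOp_pow (n k : ℕ) :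
    ∃ C : ℝ, 0 ≤ C ∧ ∀ ħ ∈ Set.Ioc (0 : ℝ) 1, ∀ f : 𝓢(EuclideanSpace ℝ (Fin n), ℂ),
      CkNorm (2 * k) f ≤
        C * ħ ^ (-(2 * k : ℝ) - n / 2) * l2Norm ((freeOp ħ ^ (k + n / 4 + 1)) f) := by
  have finrank_lt : finrank ℝ (EuclideanSpace ℝ (Fin n)) < 4 * (n / 4 + 1) := by
    rw [finrank_euclideanSpace_fin]
    lia
  obtain ⟨C, hC, pointwise⟩ := exists_norm_apply_le_l2Norm_freeOp_pow (H := ℂ) finrank_lt k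
  rw [finrank_euclideanSpace_fin, ← add_assoc] at pointwise
  refine ⟨(∑ j ∈ Finset.range (2 * k + 1), (multiIndices n j).card : ℕ) * C,
    mul_nonneg (Nat.cast_nonneg _) hC, fun ħ hħ f ↦ ?_⟩
  rw [mul_assoc, mul_assoc]
  refine CkNorm_le fun α hα x ↦ ?_
  obtain ⟨g, g_eq, fourier_le⟩ := exists_schwartzMap_eq_mderivE α f
  rw [← g_eq, ← mul_assoc]
  exact pointwise ħ hħ _ hα f g fourier_le x

end EuclideanSpace

end EllipticEstimate

open EllipticEstimate in
theorem elliptic_estimate_with_potential_general (n : ℕ) {K U : Set (EuclideanSpace ℝ (Fin n))}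
    (hK : IsCompact K) (hU : IsOpen U) (hKU : K ⊆ U) {V : EuclideanSpace ℝ (Fin n) → ℝ}
    (hV : ContDiffOn ℝ (⊤ : ℕ∞) V U) (hV_pos : ∀ x ∈ K, 0 < V x) (k : ℕ) :
    ∃ C : ℝ, 0 < C ∧ ∀ f : EuclideanSpace ℝ (Fin n) → ℂ,
      ContDiff ℝ (⊤ : ℕ∞) f → tsupport f ⊆ K → ∀ ħ ∈ Set.Ioc (0 : ℝ) 1,
        ENNReal.ofReal (CkNorm (2 * k) f) ≤
          ENNReal.ofReal (C * ħ ^ (-(2 * k : ℝ) - (n : ℝ) / 2)) *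
            eLpNorm ((schrodingerOp ħ V)^[k + n / 4 + 1] f) 2 volume := by
  obtain ⟨W, c, hc, hVW, hcW⟩ := exists_schwartzMap_one_add_eq hK hU hKU hV hV_pos
  obtain ⟨C₁, hC₁, sobolev⟩ := exists_CkNorm_le_l2Norm_freeOp_pow n k
  obtain ⟨C₂, hC₂, comparison⟩ :=
    exists_l2Norm_freeOp_pow_le_perturbedOp_pow (H := ℂ) hc hcW (k + n / 4 + 1)
  refine ⟨C₁ * C₂ + 1, by positivity, fun f hf hfK ħ hħ ↦ ?_⟩
  have hf_compact : HasCompactSupport f := hK.of_isClosed_subset (isClosed_tsupport f) hfK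
  let g := hf_compact.toSchwartzMap hf
  have hħ_pos : 0 < ħ := hħ.1
  have hħ_abs : |ħ| ≤ 1 := by rw [abs_of_pos hħ_pos]; exact hħ.2
  have op_eq : (schrodingerOp ħ V)^[k + n / 4 + 1] f = (perturbedOp ħ W ^ (k + n / 4 + 1)) g :=
    iterate_schrodingerOp_eq_perturbedOp_pow (f := g) (fun x hx ↦ hVW x (hfK hx)) ħ _
  rw [op_eq, eLpNorm_two_eq_ofReal_l2Norm, ← ENNReal.ofReal_mul (by positivity)]
  refine ENNReal.ofReal_le_ofReal ?_
  calc CkNorm (2 * k) g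
      ≤ C₁ * ħ ^ (-(2 * k : ℝ) - n / 2) * l2Norm ((freeOp ħ ^ (k + n / 4 + 1)) g) :=
        sobolev ħ hħ g
    _ ≤ C₁ * ħ ^ (-(2 * k : ℝ) - n / 2) *
          (C₂ * l2Norm ((perturbedOp ħ W ^ (k + n / 4 + 1)) g)) := by
        gcongr
        exact comparison ħ hħ_abs g
    _ = C₁ * C₂ * ħ ^ (-(2 * k : ℝ) - n / 2) *
          l2Norm ((perturbedOp ħ W ^ (k + n / 4 + 1)) g) := by ring
    _ ≤ (C₁ * C₂ + 1) * ħ ^ (-(2 * k : ℝ) - n / 2) *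
          l2Norm ((perturbedOp ħ W ^ (k + n / 4 + 1)) g) := by
        gcongr
        linarith

/-- semiclassical elliptic estimate with potential
`‖f‖_{C^{2k}} ≤ C ħ^{−2k−n/2} ‖(V − ħ²Δ)^{k+⌊n/4⌋+1} f‖_{L²}` for smooth `f`
compactly supported in a bounded open set `Ω` on a neighborhood of whose closure
`V ≥ 1` is smooth. -/
theorem elliptic_estimate_with_potential
    (n : ℕ) (hn : 1 ≤ n)
    (Ω : Set (EuclideanSpace ℝ (Fin n)))
    (hΩopen : IsOpen Ω) (hΩbd : Bornology.IsBounded Ω)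
    (V : EuclideanSpace ℝ (Fin n) → ℝ)
    (hV1 : ∀ x, 1 ≤ V x)
    (U : Set (EuclideanSpace ℝ (Fin n)))
    (hUopen : IsOpen U) (hclosure : closure Ω ⊆ U)
    (hVsmooth : ContDiffOn ℝ (⊤ : ℕ∞) V U) :
    ∀ k : ℕ, ∃ C : ℝ, 0 < C ∧
      ∀ f : EuclideanSpace ℝ (Fin n) → ℂ,
        ContDiff ℝ (⊤ : ℕ∞) f → HasCompactSupport f → tsupport f ⊆ Ω →
        ∀ hbar ∈ Set.Ioc (0 : ℝ) 1,
          ENNReal.ofReal (CkNorm (2 * k) f) ≤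
            ENNReal.ofReal (C * hbar ^ (-(2 * k : ℝ) - (n : ℝ) / 2)) *
              eLpNorm ((schrodingerOp hbar V)^[k + n / 4 + 1] f) 2
                (volume : Measure (EuclideanSpace ℝ (Fin n))) := by
  exact fun k ↦
    let ⟨C, hC, estimate⟩ := elliptic_estimate_with_potential_general n hΩbd.isCompact_closure
      hUopen hclosure hVsmooth (fun x _ ↦ one_pos.trans_le (hV1 x)) k
    ⟨C, hC, fun f hf _ hfΩ ↦ estimate f hf (hfΩ.trans subset_closure)⟩
end
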